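/- arXiv:2605.16709 — 5 statements merged into one kernel-verified Lean document; each statement's English description precedes it below -/
import Mathlib

section
/- Achievability part of Theorem 1 (covert multi-bit watermarking capacity with non-causal state). Let S, U, X be finite sets, P_S a pmf on S, and P_{X|S} a conditional pmf (token law). Suppose P_{U|S} and W_{X|U,S} are conditional pmfs satisfying the marginal constraint: for every s with P_S(s) > 0 and every x, Σ_u P_{U|S}(u|s) W_{X|U,S}(x|u,s) = P_{X|S}(x|s). Let the joint pmf of (S,U,X) be P_S · P_{U|S} · W_{X|U,S}. Then for every rate R < I(U;X) − I(U;S), every key rate R_K > I(U;X|S), and every ε > 0, there exists a blocklength n, a message set M of size at least 2^{nR}, a key set K of size at most 2^{nR_K}, a stochastic encoder f assigning to each triple (s^n, m, k) ∈ S^n × M × K a pmf on U^n, and a decoder g : X^n × K → M, such that when S^n ~ P_S^{⊗n}, the message M is uniform on M, the key K is uniform on K and independent of (M, S^n), U^n is drawn from f(S^n, M, K), and X^n is generated memorylessly with X_t ~ W_{X|U,S}(·|U_t, S_t) independently across t, the following hold: (i) P(g(X^n, K) ≠ M) ≤ ε, and (ii) for every message m, V(P̃^m_{X^n S^n}, (P_{X|S}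 P_S)^{⊗n}) ≤ ε, where P̃^m_{X^n S^n} is the joint pmf of (X^n, S^n) conditioned on M = m (averaged over the key). -/
open Finset Filter Real

noncomputable section

open scoped Classical

/-- Pushforward of a mass function along a map. -/
def pushf {α β : Type*} [Fintype α] (p : α → ℝ) (f : α → β) : β → ℝ :=
  fun b => ∑ a, if f a = b then p a else 0

/-- Shannon entropy (in bits) of a mass function on a finite type,
with the convention `0 * logb 2 0 = 0`. -/
def ent {α : Type*} [Fintype α] (p : α → ℝ) : ℝ := -∑ a, p a * Real.logb 2 (p a)

/-- Shannon entropy (in bits) of a random variable `f` under the mass function `p`. -/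
def entRV {α β : Type*} [Fintype α] [Fintype β] (p : α → ℝ) (f : α → β) : ℝ :=
  ent (pushf p f)

/-- Mutual information `I(f; g)` (in bits) under the mass function `p`. -/
def mi {α β γ : Type*} [Fintype α] [Fintype β] [Fintype γ]
    (p : α → ℝ) (f : α → β) (g : α → γ) : ℝ :=
  entRV p f + entRV p g - entRV p (fun a => (f a, g a))

/-- Conditional mutual information `I(f; g | h)` (in bits) under the mass function `p`. -/
def cmi {α β γ δ : Type*} [Fintype α] [Fintype β] [Fintype γ] [Fintype δ]
    (p : α → ℝ) (f : α → β) (g : α → γ) (h : α → δ) : ℝ :=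
  entRV p (fun a => (f a, h a)) + entRV p (fun a => (g a, h a))
    - entRV p (fun a => (f a, g a, h a)) - entRV p h

/-- Conditional entropy `H(f | g)` (in bits) under the mass function `p`. -/
def condEnt {α β γ : Type*} [Fintype α] [Fintype β] [Fintype γ]
    (p : α → ℝ) (f : α → β) (g : α → γ) : ℝ :=
  entRV p (fun a => (f a, g a)) - entRV p g

/-- Total variation distance between two mass functions on a finite type. -/
def TV {α : Type*} [Fintype α] (p q : α → ℝ) : ℝ := (∑ a, |p a - q a|) / 2

/-- The binary entropy function (in bits), with `h2 0 = h2 1 = 0`. -/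
def h2 (t : ℝ) : ℝ := -(t * Real.logb 2 t) - (1 - t) * Real.logb 2 (1 - t)


/-- i.i.d. weight of a family of symbols. -/
def cwWt {J B : Type*} [Fintype J] (q : B → ℝ) (c : J → B) : ℝ := ∏ j, q (c j)

lemma sum_pi_prod {J B : Type*} [Fintype J] [DecidableEq J] [Fintype B] (F : J → B → ℝ) :
    ∑ c : J → B, ∏ j, F j (c j) = ∏ j, ∑ b, F j b := by
  rw [Finset.prod_univ_sum, Fintype.piFinset_univ]

lemma cwWt_nonneg {J B : Type*} [Fintype J] {q : B → ℝ} (hq0 : ∀ b, 0 ≤ q b) (c : J → B) :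
    0 ≤ cwWt q c := Finset.prod_nonneg fun _ _ => hq0 _

lemma cwWt_sum {J B : Type*} [Fintype J] [DecidableEq J] [Fintype B] {q : B → ℝ} (hq1 : ∑ b, q b = 1) :
    ∑ c : J → B, cwWt q c = 1 := by
  unfold cwWt
  rw [sum_pi_prod (fun _ b => q b)]
  simp [hq1]

lemma cwWt_one {J B : Type*} [Fintype J] [DecidableEq J] [Fintype B] {q : B → ℝ} (hq1 : ∑ b, q b = 1)
    (i : J) (φ : B → ℝ) :
    ∑ c : J → B, cwWt q c * φ (c i) = ∑ b, q b * φ b := by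
  have h : ∀ c : J → B, cwWt q c * φ (c i)
      = ∏ j, (q (c j) * if j = i then φ (c j) else 1) := by
    intro c
    rw [Finset.prod_mul_distrib, Finset.prod_ite_eq' Finset.univ i (fun j => φ (c j))]
    simp [cwWt]
  simp_rw [h]
  rw [sum_pi_prod (fun j b => q b * if j = i then φ b else 1)]
  rw [Finset.prod_eq_single i]
  · simp
  · intro j _ hj
    simp [hj, hq1]
  · simp

lemma cwWt_two {J B : Type*} [Fintype J] [DecidableEq J] [Fintype B] {q : B → ℝ} (hq1 : ∑ b, q b = 1)
    {i j : J} (hij : i ≠ j) (φ ψ : B → ℝ) :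
    ∑ c : J → B, cwWt q c * (φ (c i) * ψ (c j)) = (∑ b, q b * φ b) * ∑ b, q b * ψ b := by
  have h : ∀ c : J → B, cwWt q c * (φ (c i) * ψ (c j))
      = ∏ k, (q (c k) * ((if k = i then φ (c k) else 1) * if k = j then ψ (c k) else 1)) := by
    intro c
    rw [Finset.prod_mul_distrib, Finset.prod_mul_distrib,
      Finset.prod_ite_eq' Finset.univ i (fun j => φ (c j)),
      Finset.prod_ite_eq' Finset.univ j (fun j => ψ (c j))]
    simp [cwWt]
  simp_rw [h]
  rw [sum_pi_prod (fun k b => q b * ((if k = i then φ b else 1) * if k = j then ψ b else 1))]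
  rw [Finset.prod_eq_mul i j hij]
  · simp [hij, hij.symm]
  · intro k _ hk
    simp [hk.1, hk.2, hq1]
  · simp
  · simp

lemma cwWt_var {J B I : Type*} [Fintype J] [DecidableEq J] [Fintype B] [Fintype I] {q : B → ℝ}
    (hq1 : ∑ b, q b = 1) (Y : B → ℝ) (hY : ∑ b, q b * Y b = 0) (e : I → J)
    (he : Function.Injective e) :
    ∑ c : J → B, cwWt q c * (∑ i, Y (c (e i))) ^ 2 = Fintype.card I * ∑ b, q b * Y b ^ 2 := by
  have h : ∀ c : J → B, cwWt q c * (∑ i, Y (c (e i))) ^ 2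
      = ∑ i, ∑ i', cwWt q c * (Y (c (e i)) * Y (c (e i'))) := by
    intro c
    rw [sq, Finset.sum_mul_sum, Finset.mul_sum]
    simp_rw [Finset.mul_sum]
  simp_rw [h]
  rw [Finset.sum_comm]
  have h2 : ∀ i : I, ∑ c : J → B, ∑ i', cwWt q c * (Y (c (e i)) * Y (c (e i')))
      = ∑ b, q b * Y b ^ 2 := by
    intro i
    rw [Finset.sum_comm, Finset.sum_eq_single i]
    · rw [← cwWt_one hq1 (e i) (fun b => Y b ^ 2)]
      simp_rw [sq]
    · intro i' _ hi'
      rw [cwWt_two hq1 (fun h => hi' (he h).symm), hY, zero_mul]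
    · simp
  simp [h2]

lemma cwWt_var_le {J B I : Type*} [Fintype J] [DecidableEq J] [Fintype B] [Fintype I] {q : B → ℝ}

    (hq1 : ∑ b, q b = 1) (Y : B → ℝ) (e : I → J) (he : Function.Injective e) :
    ∑ c : J → B, cwWt q c * (∑ i, Y (c (e i)) - Fintype.card I * ∑ b, q b * Y b) ^ 2
      ≤ Fintype.card I * ∑ b, q b * Y b ^ 2 := by
  set μ := ∑ b, q b * Y b with hμ
  have h := cwWt_var hq1 (fun b => Y b - μ) (by
    simp_rw [mul_sub]
    rw [Finset.sum_sub_distrib, ← Finset.sum_mul, hq1, ← hμ]; ring) e he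
  have h1 : ∀ c : J → B, ∑ i, (Y (c (e i)) - μ) = ∑ i, Y (c (e i)) - Fintype.card I * μ := by
    intro c
    rw [Finset.sum_sub_distrib]; simp
  simp_rw [h1] at h
  rw [h]
  have h2 : ∑ b, q b * (Y b - μ) ^ 2 = ∑ b, q b * Y b ^ 2 - μ ^ 2 := by
    have : ∀ b, q b * (Y b - μ) ^ 2 = q b * Y b ^ 2 - 2 * μ * (q b * Y b) + μ ^ 2 * q b := by
      intro b; ring
    simp_rw [this]
    rw [Finset.sum_add_distrib, Finset.sum_sub_distrib, ← Finset.mul_sum, ← Finset.mul_sum, hq1,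
      ← hμ]
    ring
  rw [h2]
  gcongr
  nlinarith [sq_nonneg μ]

/-- weak law of large numbers (Chebyshev). -/
lemma wlln {Ω : Type*} [Fintype Ω] {p : Ω → ℝ} (hp0 : ∀ z, 0 ≤ p z) (hp1 : ∑ z, p z = 1)
    (h : Ω → ℝ) {δ β : ℝ} (hδ : 0 < δ) (hβ : 0 < β) :
    ∃ N : ℕ, ∀ n : ℕ, N ≤ n →
      ∑ c : Fin n → Ω, (if n * δ ≤ |∑ t, h (c t) - n * ∑ z, p z * h z| then cwWt p c else 0) ≤ β := by
  set v := ∑ z, p z * h z ^ 2 with hv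
  obtain ⟨N, hN⟩ := exists_nat_gt (v / (δ ^ 2 * β))
  refine ⟨N + 1, fun n hn => ?_⟩
  have hn0 : (0 : ℝ) < n := by exact_mod_cast (by omega : 0 < n)
  have hNn : v / (δ ^ 2 * β) < n := hN.trans_le (by exact_mod_cast (by omega : N ≤ n))
  have hvar := cwWt_var_le hp1 h (id : Fin n → Fin n) Function.injective_id
  simp only [id, Fintype.card_fin] at hvar
  set μ := ∑ z, p z * h z
  have key : ∑ c : Fin n → Ω, (if n * δ ≤ |∑ t, h (c t) - n * μ| then cwWt p c else 0) * (n * δ) ^ 2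
      ≤ ∑ c : Fin n → Ω, cwWt p c * (∑ i, h (c i) - n * μ) ^ 2 := by
    apply Finset.sum_le_sum
    intro c _
    have hw := cwWt_nonneg hp0 c
    split_ifs with hc
    · apply mul_le_mul_of_nonneg_left _ hw
      rw [← sq_abs (∑ i, h (c i) - n * μ)]
      gcongr
    · rw [zero_mul]; positivity
  rw [← Finset.sum_mul] at key
  have h3 := key.trans hvar
  have h4 : v < n * (δ ^ 2 * β) := by
    rwa [div_lt_iff₀ (by positivity)] at hNn
  have h5 : (n : ℝ) * v ≤ β * (n * δ) ^ 2 := by nlinarith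
  exact le_of_mul_le_mul_right (h3.trans h5) (by positivity)

/-- one-shot soft covering -/
lemma soft_cover {J B Z I : Type*} [Fintype J] [DecidableEq J] [Fintype B] [Fintype Z] [Fintype I] [Nonempty I]
    {q : B → ℝ} (hq0 : ∀ b, 0 ≤ q b) (hq1 : ∑ b, q b = 1) (V : B → Z → ℝ)
    (hV0 : ∀ b z, 0 ≤ V b z) (PZ : Z → ℝ) (hPZ : ∀ z, ∑ b, q b * V b z = PZ z)
    (hPZ1 : ∑ z, PZ z = 1) (e : I → J) (he : Function.Injective e) {τ η : ℝ} (hτ : 0 ≤ τ)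
    (hη : 0 < η) :
    ∑ c : J → B, cwWt q c * ∑ z, |PZ z - (∑ i, V (c (e i)) z) / Fintype.card I|
      ≤ 2 * (∑ b, ∑ z, if τ * PZ z < V b z then q b * V b z else 0)
        + (η / 2 + τ / (2 * η * Fintype.card I)) := by
  set N : ℝ := (Fintype.card I : ℝ) with hN
  have hN0 : 0 < N := by rw [hN]; exact_mod_cast Fintype.card_pos
  have hPZ0 : ∀ z, 0 ≤ PZ z := fun z => by
    rw [← hPZ]; exact Finset.sum_nonneg fun b _ => mul_nonneg (hq0 b) (hV0 b z)
  let V1 : B → Z → ℝ := fun b z => if τ * PZ z < V b z then 0 else V b z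
  let V2 : B → Z → ℝ := fun b z => if τ * PZ z < V b z then V b z else 0
  have hV12 : ∀ b z, V b z = V1 b z + V2 b z := by
    intro b z; simp only [V1, V2]; split_ifs <;> simp
  have hV10 : ∀ b z, 0 ≤ V1 b z := by
    intro b z; simp only [V1]; split_ifs; exacts [le_rfl, hV0 b z]
  have hV20 : ∀ b z, 0 ≤ V2 b z := by
    intro b z; simp only [V2]; split_ifs; exacts [hV0 b z, le_rfl]
  have hV1le : ∀ b z, V1 b z ≤ τ * PZ z := by
    intro b z; simp only [V1]; split_ifs with h
    exacts [mul_nonneg hτ (hPZ0 z), not_lt.1 h]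
  have hV1le' : ∀ b z, V1 b z ≤ V b z := by
    intro b z; rw [hV12 b z]; linarith [hV20 b z]
  let m1 : Z → ℝ := fun z => ∑ b, q b * V1 b z
  let m2 : Z → ℝ := fun z => ∑ b, q b * V2 b z
  have hm : ∀ z, PZ z = m1 z + m2 z := by
    intro z
    simp only [m1, m2]
    rw [← hPZ z, ← Finset.sum_add_distrib]
    refine Finset.sum_congr rfl fun b _ => ?_
    rw [hV12 b z]; ring
  have hm20 : ∀ z, 0 ≤ m2 z := fun z =>
    Finset.sum_nonneg fun b _ => mul_nonneg (hq0 b) (hV20 b z)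
  -- per z bound
  have main : ∀ z, ∑ c : J → B, cwWt q c * |PZ z - (∑ i, V (c (e i)) z) / N|
      ≤ 2 * m2 z + (η / 2 + τ / (2 * η * N)) * PZ z := by
    intro z
    have hpt : ∀ c : J → B, |PZ z - (∑ i, V (c (e i)) z) / N| ≤
        (m2 z + (∑ i, V2 (c (e i)) z) / N) + |(∑ i, V1 (c (e i)) z - N * m1 z)| / N := by
      intro c
      have e1 : PZ z - (∑ i, V (c (e i)) z) / N =
          m2 z - (∑ i, V2 (c (e i)) z) / N - (∑ i, V1 (c (e i)) z - N * m1 z) / N := by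
        simp_rw [hV12]
        rw [Finset.sum_add_distrib, hm z]
        field_simp
        ring
      rw [e1]
      have h2 : 0 ≤ (∑ i, V2 (c (e i)) z) / N :=
        div_nonneg (Finset.sum_nonneg fun i _ => hV20 _ _) hN0.le
      have h3 := hm20 z
      calc _ ≤ |m2 z - (∑ i, V2 (c (e i)) z) / N| + |(∑ i, V1 (c (e i)) z - N * m1 z) / N| :=
            abs_sub _ _
        _ ≤ _ := by
          rw [abs_div _ N, abs_of_pos hN0]
          gcongr
          rw [abs_le]; constructor <;> linarith
    have hA : ∑ c : J → B, cwWt q c * (m2 z + (∑ i, V2 (c (e i)) z) / N) = 2 * m2 z := by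
      simp_rw [mul_add]
      rw [Finset.sum_add_distrib, ← Finset.sum_mul, cwWt_sum hq1]
      have : ∑ c : J → B, cwWt q c * ((∑ i, V2 (c (e i)) z) / N) = m2 z := by
        simp_rw [← mul_div_assoc]
        rw [← Finset.sum_div]
        simp_rw [Finset.mul_sum]
        rw [Finset.sum_comm]
        have : ∀ i, ∑ c : J → B, cwWt q c * V2 (c (e i)) z = m2 z := fun i =>
          cwWt_one hq1 (e i) (fun b => V2 b z)
        simp_rw [this]
        simp only [Finset.sum_const, Finset.card_univ, nsmul_eq_mul, ← hN]
        field_simp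
      rw [this]; ring
    have hB : ∑ c : J → B, cwWt q c * (|(∑ i, V1 (c (e i)) z - N * m1 z)| / N)
        ≤ (η / 2 + τ / (2 * η * N)) * PZ z := by
      have hvar := cwWt_var_le hq1 (fun b => V1 b z) e he
      rw [← hN] at hvar
      change ∑ c : J → B, cwWt q c * (∑ i, V1 (c (e i)) z - N * m1 z) ^ 2 ≤ _ at hvar
      have hsq : ∑ b, q b * V1 b z ^ 2 ≤ τ * PZ z * PZ z := by
        calc _ ≤ ∑ b, τ * PZ z * (q b * V b z) := by
              apply Finset.sum_le_sum
              intro b _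
              have := mul_le_mul (hV1le b z) (hV1le' b z) (hV10 b z) (mul_nonneg hτ (hPZ0 z))
              nlinarith [hq0 b]
          _ = _ := by rw [← Finset.mul_sum, hPZ z]
      have hvar2 : ∑ c : J → B, cwWt q c * (∑ i, V1 (c (e i)) z - N * m1 z) ^ 2
          ≤ N * (τ * PZ z * PZ z) := hvar.trans (by gcongr)
      rcases (hPZ0 z).eq_or_lt with h0 | hpos
      · have hz : ∀ b, V1 b z = 0 := fun b =>
          le_antisymm (by have := hV1le b z; rwa [← h0, mul_zero] at this) (hV10 b z)
        have : m1 z = 0 := by simp [m1, hz]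
        simp [hz, this, ← h0]
      · set P := PZ z
        have hpt2 : ∀ c : J → B, cwWt q c * (|(∑ i, V1 (c (e i)) z - N * m1 z)| / N) ≤
            cwWt q c * (η * P / 2) +
             (1 / (2 * η * P * N ^ 2)) * (cwWt q c * (∑ i, V1 (c (e i)) z - N * m1 z) ^ 2) := by
          intro c
          set T := (∑ i, V1 (c (e i)) z - N * m1 z)
          have : |T| / N ≤ (η * P / 2) + (1 / (2 * η * P * N ^ 2)) * T ^ 2 := by
            rw [← sq_abs T]
            have : (η * P / 2) + (1 / (2 * η * P * N ^ 2)) * |T| ^ 2 - |T| / N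
              = (η * P * N - |T|) ^ 2 / (2 * η * P * N ^ 2) := by
              field_simp; ring
            have h0 : 0 ≤ (η * P * N - |T|) ^ 2 / (2 * η * P * N ^ 2) := by positivity
            linarith
          calc _ ≤ cwWt q c * ((η * P / 2) + (1 / (2 * η * P * N ^ 2)) * T ^ 2) :=
                mul_le_mul_of_nonneg_left this (cwWt_nonneg hq0 c)
            _ = _ := by ring
        calc _ ≤ _ := Finset.sum_le_sum fun c _ => hpt2 c
          _ = η * P / 2 + (1 / (2 * η * P * N ^ 2)) *
              ∑ c : J → B, cwWt q c * (∑ i, V1 (c (e i)) z - N * m1 z) ^ 2 := by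
            rw [Finset.sum_add_distrib, ← Finset.sum_mul, cwWt_sum hq1, ← Finset.mul_sum, one_mul]
          _ ≤ η * P / 2 + (1 / (2 * η * P * N ^ 2)) * (N * (τ * P * P)) := by
            gcongr
          _ = _ := by field_simp
    calc _ ≤ ∑ c : J → B, (cwWt q c * (m2 z + (∑ i, V2 (c (e i)) z) / N) +
            cwWt q c * (|(∑ i, V1 (c (e i)) z - N * m1 z)| / N)) := by
          apply Finset.sum_le_sum
          intro c _
          rw [← mul_add]
          exact mul_le_mul_of_nonneg_left (hpt c) (cwWt_nonneg hq0 c)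
      _ ≤ _ := by
          rw [Finset.sum_add_distrib, hA]
          gcongr
  have hm2 : ∑ z, m2 z = ∑ b, ∑ z, if τ * PZ z < V b z then q b * V b z else 0 := by
    simp only [m2, V2]
    rw [Finset.sum_comm]
    simp only [mul_ite, mul_zero]
  simp_rw [Finset.mul_sum]
  rw [Finset.sum_comm]
  calc _ ≤ _ := Finset.sum_le_sum fun z _ => main z
    _ = _ := by
      rw [Finset.sum_add_distrib, ← Finset.mul_sum, ← Finset.mul_sum, hPZ1, hm2]
      simp_rw [Finset.mul_sum]
      ring

/-- Likelihood encoder for one message and key. -/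
lemma lik_encoder {A B L : Type*} [Fintype B] [Fintype L] [Nonempty L]
    (v : L → A → ℝ) (hv : ∀ l a, 0 ≤ v l a) (cw : L → B) :
    ∃ f : A → B → ℝ, (∀ a b, 0 ≤ f a b) ∧ (∀ a, ∑ b, f a b = 1) ∧
      ∀ a b, (∑ l, v l a) / Fintype.card L * f a b
        = (∑ l, if cw l = b then v l a else 0) / Fintype.card L := by
  obtain ⟨l0⟩ := ‹Nonempty L›
  have hfb : ∀ a b, 0 ≤ ∑ l, if cw l = b then v l a else 0 := fun a b =>
    Finset.sum_nonneg fun l _ => by split_ifs; exacts [hv l a, le_rfl]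
  have hsum : ∀ a, ∑ b, (∑ l, if cw l = b then v l a else 0) = ∑ l, v l a := by
    intro a
    rw [Finset.sum_comm]
    simp
  refine ⟨fun a b => if ∑ l, v l a = 0 then (if cw l0 = b then 1 else 0)
    else (∑ l, if cw l = b then v l a else 0) / ∑ l, v l a, ?_, ?_, ?_⟩
  · intro a b
    beta_reduce
    split_ifs
    · exact zero_le_one
    · exact le_rfl
    · exact div_nonneg (hfb a b) (Finset.sum_nonneg fun l _ => hv l a)
  · intro a
    beta_reduce
    split_ifs with h
    · simp
    · rw [← Finset.sum_div, hsum, div_self h]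
  · intro a b
    beta_reduce
    split_ifs with h1 h2
    · have hz : ∀ l, v l a = 0 := fun l =>
        (Finset.sum_eq_zero_iff_of_nonneg (fun l _ => hv l a)).1 h1 l (Finset.mem_univ l)
      simp [hz]
    · have hz : ∀ l, v l a = 0 := fun l =>
        (Finset.sum_eq_zero_iff_of_nonneg (fun l _ => hv l a)).1 h1 l (Finset.mem_univ l)
      simp [hz]
    · field_simp

/-- Deterministic comparison of the true system with the idealized one (single message). -/
lemma det_compare {A B C K L : Type*} [Fintype A] [Fintype B] [Fintype C] [Fintype K]
    [Fintype L] [Nonempty L] [Nonempty K]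
    (PA : A → ℝ) (W : B → A → C → ℝ) (T : A → C → ℝ)
    (hW0 : ∀ b a x, 0 ≤ W b a x) (hW1 : ∀ b a, ∑ x, W b a x = 1)
    (V : B → A → ℝ) (hV0 : ∀ b a, 0 ≤ V b a) (cw : K → L → B) :
    ∃ f : A → K → B → ℝ, (∀ a k b, 0 ≤ f a k b) ∧ (∀ a k, ∑ b, f a k b = 1) ∧
      (∀ (E : C → K → Prop) [∀ x k, Decidable (E x k)],
        ∑ k, ∑ a, ∑ b, ∑ x, (if E x k then PA a * (1 / Fintype.card K) * f a k b * W b a x else 0)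
        ≤ (∑ k, ∑ l, ∑ x, if E x k then ∑ a, V (cw k l) a * W (cw k l) a x else 0)
            / (Fintype.card K * Fintype.card L)
          + (∑ k, ∑ a, |PA a - (∑ l, V (cw k l) a) / Fintype.card L|) / Fintype.card K) ∧
      (∑ a, ∑ x, |(∑ k, ∑ b, PA a * (1 / Fintype.card K) * f a k b * W b a x) - T a x|
        ≤ (∑ k, ∑ a, |PA a - (∑ l, V (cw k l) a) / Fintype.card L|) / Fintype.card K
          + ∑ a, ∑ x, |T a x - (∑ k, ∑ l, V (cw k l) a * W (cw k l) a x)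
            / (Fintype.card K * Fintype.card L)|) := by
  choose f hf0 hf1 hf using fun k => lik_encoder (fun l a => V (cw k l) a)
    (fun l a => hV0 _ _) (cw k)
  set NK : ℝ := (Fintype.card K : ℝ) with hNK
  set NL : ℝ := (Fintype.card L : ℝ) with hNL
  have hNK0 : 0 < NK := by rw [hNK]; exact_mod_cast Fintype.card_pos
  have hNL0 : 0 < NL := by rw [hNL]; exact_mod_cast Fintype.card_pos
  set q : K → A → ℝ := fun k a => (∑ l, V (cw k l) a) / NL with hq
  -- ideal marginal over b
  have hideal : ∀ k a x, ∑ b, q k a * f k a b * W b a x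
      = (∑ l, V (cw k l) a * W (cw k l) a x) / NL := by
    intro k a x
    have : ∀ b, q k a * f k a b * W b a x
        = (∑ l, if cw k l = b then V (cw k l) a * W b a x else 0) / NL := by
      intro b
      rw [hq]
      simp only
      rw [hf k a b, div_mul_eq_mul_div, Finset.sum_mul]
      simp only [ite_mul, zero_mul]
    simp_rw [this]
    rw [← Finset.sum_div, Finset.sum_comm]
    simp
  have hdiff : ∀ k a, ∑ b, ∑ x, |PA a - q k a| * f k a b * W b a x = |PA a - q k a| := by
    intro k a
    simp_rw [← Finset.mul_sum, hW1, mul_one]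
    rw [← Finset.mul_sum, hf1, mul_one]
  refine ⟨fun a k b => f k a b, fun a k b => hf0 k a b, fun a k => hf1 k a, ?_, ?_⟩
  · intro E _
    rw [Finset.sum_div, Finset.sum_div, ← Finset.sum_add_distrib]
    apply Finset.sum_le_sum
    intro k _
    have step : ∀ a b x, (if E x k then PA a * (1 / NK) * f k a b * W b a x else 0)
        ≤ (1 / NK) * (if E x k then q k a * f k a b * W b a x else 0)
          + (1 / NK) * (|PA a - q k a| * f k a b * W b a x) := by
      intro a b x
      have h1 : 0 ≤ f k a b * W b a x := mul_nonneg (hf0 k a b) (hW0 b a x)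
      have h2 := le_abs_self (PA a - q k a)
      have h3 : 0 ≤ 1 / NK := by positivity
      split_ifs
      · have : PA a * (f k a b * W b a x) ≤ (q k a + |PA a - q k a|) * (f k a b * W b a x) :=
          mul_le_mul_of_nonneg_right (by linarith) h1
        have := mul_le_mul_of_nonneg_left this h3
        linarith
      · rw [mul_zero, zero_add]
        have := abs_nonneg (PA a - q k a)
        rw [mul_assoc (|PA a - q k a|)]
        positivity
    calc _ ≤ ∑ a, ∑ b, ∑ x, ((1 / NK) * (if E x k then q k a * f k a b * W b a x else 0)
          + (1 / NK) * (|PA a - q k a| * f k a b * W b a x)) :=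
          Finset.sum_le_sum fun a _ => Finset.sum_le_sum fun b _ =>
            Finset.sum_le_sum fun x _ => step a b x
      _ = (1 / NK) * (∑ a, ∑ b, ∑ x, (if E x k then q k a * f k a b * W b a x else 0))
          + (1 / NK) * (∑ a, ∑ b, ∑ x, (|PA a - q k a| * f k a b * W b a x)) := by
          simp_rw [Finset.sum_add_distrib, ← Finset.mul_sum]
      _ = _ := by
          simp_rw [hdiff]
          have h5 : ∑ a, ∑ b, ∑ x, (if E x k then q k a * f k a b * W b a x else 0)
              = (∑ l, ∑ x, if E x k then ∑ a, V (cw k l) a * W (cw k l) a x else 0) / NL := by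
            have : ∀ a, ∑ b, ∑ x, (if E x k then q k a * f k a b * W b a x else 0)
                = ∑ x, if E x k then (∑ l, V (cw k l) a * W (cw k l) a x) / NL else 0 := by
              intro a
              rw [Finset.sum_comm]
              refine Finset.sum_congr rfl fun x _ => ?_
              split_ifs
              · exact hideal k a x
              · simp
            simp_rw [this]
            rw [Finset.sum_comm, Finset.sum_comm (s := (Finset.univ : Finset L)), Finset.sum_div]
            refine Finset.sum_congr rfl fun x _ => ?_
            split_ifs
            · rw [← Finset.sum_div, Finset.sum_comm]
            · simp
          rw [h5]
          change _ = _ + (∑ a, |PA a - q k a|) / NK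
          generalize ∑ a, |PA a - q k a| = y
          field_simp
  · have hsplit : ∀ a x, |(∑ k, ∑ b, PA a * (1 / NK) * f k a b * W b a x) - T a x|
        ≤ (1 / NK) * (∑ k, ∑ b, |PA a - q k a| * f k a b * W b a x)
          + |T a x - (∑ k, ∑ l, V (cw k l) a * W (cw k l) a x) / (NK * NL)| := by
      intro a x
      have e1 : (∑ k, ∑ l, V (cw k l) a * W (cw k l) a x) / (NK * NL)
          = (1 / NK) * ∑ k, ∑ b, q k a * f k a b * W b a x := by
        simp_rw [hideal]
        rw [← Finset.sum_div]
        field_simp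
      have e2 : (∑ k, ∑ b, PA a * (1 / NK) * f k a b * W b a x) - T a x
          = (1 / NK) * (∑ k, ∑ b, (PA a - q k a) * f k a b * W b a x)
            - (T a x - (∑ k, ∑ l, V (cw k l) a * W (cw k l) a x) / (NK * NL)) := by
        rw [e1]
        have : ∑ k, ∑ b, PA a * (1 / NK) * f k a b * W b a x
            = (1 / NK) * ∑ k, ∑ b, PA a * f k a b * W b a x := by
          simp_rw [Finset.mul_sum]
          refine Finset.sum_congr rfl fun k _ => Finset.sum_congr rfl fun b _ => ?_
          ring
        rw [this]
        simp_rw [sub_mul, Finset.sum_sub_distrib]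
        ring
      rw [e2]
      refine (abs_sub _ _).trans ?_
      gcongr
      rw [abs_mul, abs_of_pos (by positivity : 0 < 1 / NK)]
      gcongr
      refine (Finset.abs_sum_le_sum_abs _ _).trans (Finset.sum_le_sum fun k _ => ?_)
      refine (Finset.abs_sum_le_sum_abs _ _).trans (Finset.sum_le_sum fun b _ => ?_)
      rw [abs_mul, abs_mul, abs_of_nonneg (hf0 k a b), abs_of_nonneg (hW0 b a x)]
    calc _ ≤ _ := Finset.sum_le_sum fun a _ => Finset.sum_le_sum fun x _ => hsplit a x
      _ = _ := by
        simp_rw [Finset.sum_add_distrib, ← Finset.mul_sum]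
        congr 1
        have : ∀ a, ∑ x, ∑ k, ∑ b, |PA a - q k a| * f k a b * W b a x
            = ∑ k, |PA a - q k a| := by
          intro a
          rw [Finset.sum_comm]
          refine Finset.sum_congr rfl fun k _ => ?_
          rw [Finset.sum_comm, hdiff]
        simp_rw [this]
        rw [Finset.sum_comm]
        ring

/-- threshold decoder -/
lemma exists_decoder {B C M K L : Type*} [Nonempty M] [DecidableEq M] (Q : B → C → ℝ) (hQ : ∀ b x, 0 ≤ Q b x)
    [Fintype M] [Fintype L] (Th : C → ℝ) (c : M × K × L → B) :
    ∃ g : C → K → M, ∀ m k l x,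
      (if g x k ≠ m then Q (c (m, k, l)) x else 0) ≤
        (if Q (c (m, k, l)) x ≤ Th x then Q (c (m, k, l)) x else 0)
        + ∑ m', ∑ l', if m' ≠ m then
            Q (c (m, k, l)) x * (if Th x < Q (c (m', k, l')) x then 1 else 0) else 0 := by
  obtain ⟨m0⟩ := ‹Nonempty M›
  refine ⟨fun x k => if h : ∃ m l, Th x < Q (c (m, k, l)) x then h.choose else m0, ?_⟩
  intro m k l x
  have hnn : ∀ m' l', 0 ≤ (if m' ≠ m then
            Q (c (m, k, l)) x * (if Th x < Q (c (m', k, l')) x then 1 else 0) else 0) := by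
    intro m' l'
    have := hQ (c (m, k, l)) x
    split_ifs <;> simp [this]
  have hsn := Finset.sum_nonneg fun m' (_ : m' ∈ (Finset.univ : Finset M)) =>
    Finset.sum_nonneg fun l' (_ : l' ∈ (Finset.univ : Finset L)) => hnn m' l'
  by_cases hle : Q (c (m, k, l)) x ≤ Th x
  · rw [if_pos hle]
    have := hQ (c (m, k, l)) x
    split_ifs <;> linarith
  · rw [if_neg hle, zero_add]
    have hex : ∃ m l, Th x < Q (c (m, k, l)) x := ⟨m, l, not_le.1 hle⟩
    beta_reduce
    rw [dif_pos hex]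
    split_ifs with hne
    · obtain ⟨l', hl'⟩ := hex.choose_spec
      calc Q (c (m, k, l)) x = (if hex.choose ≠ m then
            Q (c (m, k, l)) x * (if Th x < Q (c (hex.choose, k, l')) x then 1 else 0) else 0) := by
            rw [if_pos hne, if_pos hl', mul_one]
        _ ≤ ∑ l', (if hex.choose ≠ m then
            Q (c (m, k, l)) x * (if Th x < Q (c (hex.choose, k, l')) x then 1 else 0) else 0) :=
            Finset.single_le_sum (fun l' _ => hnn hex.choose l') (Finset.mem_univ l')
        _ ≤ _ := Finset.single_le_sum (f := fun m' => ∑ l', (if m' ≠ m then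
            Q (c (m, k, l)) x * (if Th x < Q (c (m', k, l')) x then 1 else 0) else 0))
            (fun m' _ => Finset.sum_nonneg fun l' _ => hnn m' l')
            (Finset.mem_univ _)
    · exact hsn

/-- expected ideal decoding error for a given message -/
lemma decode_bound {B C M K L : Type*} [Fintype B] [Fintype C] [Fintype M] [Fintype K] [Fintype L]
    [DecidableEq M] [DecidableEq K] [DecidableEq L] [Nonempty K] [Nonempty L]
    {q : B → ℝ} (hq0 : ∀ b, 0 ≤ q b) (hq1 : ∑ b, q b = 1)
    (Q : B → C → ℝ) (hQ : ∀ b x, 0 ≤ Q b x) (PC : C → ℝ) (hPC : ∀ x, ∑ b, q b * Q b x = PC x)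
    (hPC1 : ∑ x, PC x = 1) {τ : ℝ} (hτ : 0 < τ) (m : M) :
    ∑ c : M × K × L → B, cwWt q c * ((∑ k, ∑ l, ∑ x,
        ((if Q (c (m, k, l)) x ≤ τ * PC x then Q (c (m, k, l)) x else 0)
        + ∑ m', ∑ l', if m' ≠ m then
            Q (c (m, k, l)) x * (if τ * PC x < Q (c (m', k, l')) x then 1 else 0) else 0))
        / (Fintype.card K * Fintype.card L))
      ≤ (∑ b, ∑ x, if Q b x ≤ τ * PC x then q b * Q b x else 0)
        + Fintype.card M * Fintype.card L / τ := by
  have hNK0 : (0 : ℝ) < Fintype.card K := by exact_mod_cast Fintype.card_pos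
  have hNL0 : (0 : ℝ) < Fintype.card L := by exact_mod_cast Fintype.card_pos
  have hPC0 : ∀ x, 0 ≤ PC x := fun x => by
    rw [← hPC]; exact Finset.sum_nonneg fun b _ => mul_nonneg (hq0 b) (hQ b x)
  -- cross term
  have hcross : ∀ k l m' l', ∑ x, ∑ c : M × K × L → B, cwWt q c * (if m' ≠ m then
            Q (c (m, k, l)) x * (if τ * PC x < Q (c (m', k, l')) x then 1 else 0) else 0)
        ≤ 1 / τ := by
    intro k l m' l'
    by_cases hm : m' = m
    · simp [hm, hτ.le]
    · have hne : ((m, k, l) : M × K × L) ≠ (m', k, l') := fun h => hm (by simpa using (congrArg Prod.fst h).symm)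
      simp only [ne_eq, hm, not_false_eq_true, if_true]
      have : ∀ x, ∑ c : M × K × L → B, cwWt q c * (
            Q (c (m, k, l)) x * (if τ * PC x < Q (c (m', k, l')) x then (1:ℝ) else 0))
          ≤ PC x / τ := by
        intro x
        rw [cwWt_two hq1 hne (fun b => Q b x) (fun b => if τ * PC x < Q b x then (1:ℝ) else 0), hPC]
        rw [le_div_iff₀ hτ]
        calc PC x * (∑ b, q b * (if τ * PC x < Q b x then (1:ℝ) else 0)) * τ
            = ∑ b, q b * (if τ * PC x < Q b x then τ * PC x else 0) := by
              rw [Finset.mul_sum, Finset.sum_mul]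
              refine Finset.sum_congr rfl fun b _ => ?_
              split_ifs <;> ring
          _ ≤ ∑ b, q b * Q b x := by
              refine Finset.sum_le_sum fun b _ => mul_le_mul_of_nonneg_left ?_ (hq0 b)
              split_ifs with h
              exacts [h.le, hQ b x]
          _ = PC x := hPC x
      calc _ ≤ ∑ x, PC x / τ := Finset.sum_le_sum fun x _ => this x
        _ = 1 / τ := by rw [← Finset.sum_div, hPC1]
  have hfirst : ∀ k l, ∑ x, ∑ c : M × K × L → B, cwWt q c *
      (if Q (c (m, k, l)) x ≤ τ * PC x then Q (c (m, k, l)) x else 0)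
      = ∑ b, ∑ x, if Q b x ≤ τ * PC x then q b * Q b x else 0 := by
    intro k l
    rw [Finset.sum_comm (s := (Finset.univ : Finset B))]
    refine Finset.sum_congr rfl fun x _ => ?_
    rw [cwWt_one hq1 (m, k, l) (fun b => if Q b x ≤ τ * PC x then Q b x else 0)]
    simp only [mul_ite, mul_zero]
  set P3 := ∑ b, ∑ x, if Q b x ≤ τ * PC x then q b * Q b x else 0
  simp_rw [← mul_div_assoc]
  rw [← Finset.sum_div, div_le_iff₀ (by positivity)]
  have hkl : ∀ k l, ∑ x, ∑ c : M × K × L → B, cwWt q c *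
        ((if Q (c (m, k, l)) x ≤ τ * PC x then Q (c (m, k, l)) x else 0)
        + ∑ m', ∑ l', if m' ≠ m then
            Q (c (m, k, l)) x * (if τ * PC x < Q (c (m', k, l')) x then 1 else 0) else 0)
      ≤ P3 + Fintype.card M * Fintype.card L / τ := by
    intro k l
    simp_rw [mul_add, Finset.sum_add_distrib]
    rw [hfirst]
    gcongr
    have : ∑ x, ∑ c : M × K × L → B, cwWt q c * ∑ m', ∑ l', (if m' ≠ m then
            Q (c (m, k, l)) x * (if τ * PC x < Q (c (m', k, l')) x then (1:ℝ) else 0) else 0)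
        = ∑ m', ∑ l', ∑ x, ∑ c : M × K × L → B, cwWt q c * (if m' ≠ m then
            Q (c (m, k, l)) x * (if τ * PC x < Q (c (m', k, l')) x then (1:ℝ) else 0) else 0) := by
      simp_rw [Finset.mul_sum]
      have h1 : ∀ x, ∑ c : M × K × L → B, ∑ m', ∑ l', cwWt q c * (if m' ≠ m then
            Q (c (m, k, l)) x * (if τ * PC x < Q (c (m', k, l')) x then (1:ℝ) else 0) else 0)
          = ∑ m', ∑ l', ∑ c : M × K × L → B, cwWt q c * (if m' ≠ m then
            Q (c (m, k, l)) x * (if τ * PC x < Q (c (m', k, l')) x then (1:ℝ) else 0) else 0) := by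
        intro x
        rw [Finset.sum_comm]
        refine Finset.sum_congr rfl fun m' _ => ?_
        rw [Finset.sum_comm]
      simp_rw [h1]
      rw [Finset.sum_comm]
      refine Finset.sum_congr rfl fun m' _ => ?_
      rw [Finset.sum_comm]
    rw [this]
    calc _ ≤ ∑ m' : M, ∑ l' : L, 1 / τ := Finset.sum_le_sum fun m' _ => Finset.sum_le_sum
            fun l' _ => hcross k l m' l'
      _ = _ := by simp; ring
  simp_rw [Finset.mul_sum]
  rw [Finset.sum_comm]
  calc _ ≤ ∑ k : K, ∑ l : L, (P3 + Fintype.card M * Fintype.card L / τ) := by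
        refine Finset.sum_le_sum fun k _ => ?_
        rw [Finset.sum_comm]
        refine Finset.sum_le_sum fun l _ => ?_
        rw [Finset.sum_comm]
        exact hkl k l
    _ = _ := by simp; ring

lemma expurgate {M' : ℕ} (v : Fin (2 * M') → ℝ) (hv : ∀ i, 0 ≤ v i) {γ : ℝ} (hγ : 0 < γ)
    (hsum : ∑ i, v i ≤ (2 * M' : ℕ) * γ) :
    ∃ e : Fin M' → Fin (2 * M'), Function.Injective e ∧ ∀ i, v (e i) ≤ 2 * γ := by
  have hbad : (Finset.univ.filter fun i => ¬ v i ≤ 2 * γ).card ≤ M' := by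
    have h1 : ((Finset.univ.filter fun i => ¬ v i ≤ 2 * γ).card : ℝ) * (2 * γ) ≤ M' * (2 * γ) := by
      calc _ = ∑ i ∈ Finset.univ.filter (fun i => ¬ v i ≤ 2 * γ), (2 * γ) := by simp
        _ ≤ ∑ i ∈ Finset.univ.filter (fun i => ¬ v i ≤ 2 * γ), v i := by
            refine Finset.sum_le_sum fun i hi => ?_
            exact (not_le.1 (Finset.mem_filter.1 hi).2).le
        _ ≤ ∑ i, v i := Finset.sum_le_sum_of_subset_of_nonneg (Finset.filter_subset _ _)
            fun i _ _ => hv i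
        _ ≤ _ := hsum
        _ = _ := by push_cast; ring
    exact_mod_cast le_of_mul_le_mul_right h1 (by positivity)
  have hgood : M' ≤ (Finset.univ.filter fun i => v i ≤ 2 * γ).card := by
    have := Finset.card_filter_add_card_filter_not (s := (Finset.univ : Finset (Fin (2 * M'))))
      (fun i => v i ≤ 2 * γ)
    rw [Finset.card_univ, Fintype.card_fin] at this
    omega
  have hc : Fintype.card (Fin M') ≤ Fintype.card {i // v i ≤ 2 * γ} := by
    rw [Fintype.card_fin, Fintype.card_subtype]; exact hgood
  obtain ⟨e⟩ := Function.Embedding.nonempty_of_card_le hc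
  exact ⟨fun i => (e i).1, fun i j h => e.injective (Subtype.ext h), fun i => (e i).2⟩

lemma exists_codebook {D : Type*} [Fintype D] (w F : D → ℝ) (hw0 : ∀ c, 0 ≤ w c)
    (hw1 : ∑ c, w c = 1) {γ : ℝ} (h : ∑ c, w c * F c ≤ γ) : ∃ c, F c ≤ γ := by
  by_contra! hc
  have h0 : ∃ c, 0 < w c := by
    by_contra! h0
    have : ∑ c, w c ≤ 0 := Finset.sum_nonpos fun c _ => h0 c
    linarith
  obtain ⟨c0, hc0⟩ := h0
  have : ∑ c, w c * γ < ∑ c, w c * F c :=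
    Finset.sum_lt_sum (fun c _ => mul_le_mul_of_nonneg_left (hc c).le (hw0 c))
      ⟨c0, Finset.mem_univ _, mul_lt_mul_of_pos_left (hc c0) hc0⟩
  rw [← Finset.sum_mul, hw1, one_mul] at this
  linarith

theorem oneshot {A B C : Type*} [Fintype A] [Fintype B] [Fintype C]
    (PA : A → ℝ) (PU : A → B → ℝ) (W : B → A → C → ℝ) (T : A → C → ℝ)
    (PB : B → ℝ) (PBC : B → C → ℝ) (PC : C → ℝ)
    (hPA0 : ∀ a, 0 ≤ PA a) (hPA1 : ∑ a, PA a = 1)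
    (hPU0 : ∀ a b, 0 ≤ PU a b) (hPU1 : ∀ a, ∑ b, PU a b = 1)
    (hW0 : ∀ b a x, 0 ≤ W b a x) (hW1 : ∀ b a, ∑ x, W b a x = 1)
    (hT : ∀ a x, ∑ b, PA a * PU a b * W b a x = T a x)
    (hPB : ∀ b, ∑ a, PA a * PU a b = PB b)
    (hPBC : ∀ b x, ∑ a, PA a * PU a b * W b a x = PBC b x)
    (hPC : ∀ x, ∑ b, PBC b x = PC x)
    {β τ1 τ2 τ3 : ℝ} (hβ : 0 < β) (hτ1 : 0 < τ1) (hτ2 : 0 < τ2) (hτ3 : 0 < τ3)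
    (M' K L : ℕ) (hM' : 0 < M') (hK : 0 < K) (hL : 0 < L)
    (h1 : (∑ a, ∑ b, ∑ x, if τ1 * PA a * PB b < PA a * PU a b
      then PA a * PU a b * W b a x else 0) ≤ β)
    (h2 : (∑ a, ∑ b, ∑ x, if τ2 * T a x * PB b < PA a * PU a b * W b a x
      then PA a * PU a b * W b a x else 0) ≤ β)
    (h3 : (∑ a, ∑ b, ∑ x, if PBC b x ≤ τ3 * PC x * PB b
      then PA a * PU a b * W b a x else 0) ≤ β)
    (hr1 : τ1 / L ≤ β ^ 2) (hr2 : τ2 / (K * L) ≤ β ^ 2) (hr3 : (2 * M' : ℕ) * L / τ3 ≤ β) :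
    ∃ (f : A → Fin M' → Fin K → B → ℝ) (g : C → Fin K → Fin M'),
      (∀ a m k b, 0 ≤ f a m k b) ∧ (∀ a m k, ∑ b, f a m k b = 1) ∧
      (∀ m, ∑ k, ∑ a, ∑ b, ∑ x,
        (if g x k ≠ m then PA a * (1 / (K : ℝ)) * f a m k b * W b a x else 0) ≤ 16 * β) ∧
      (∀ m, (∑ a, ∑ x, |(∑ k, ∑ b, PA a * (1 / (K : ℝ)) * f a m k b * W b a x) - T a x|) / 2
        ≤ 16 * β) := by
  have : NeZero K := ⟨hK.ne'⟩
  have : NeZero L := ⟨hL.ne'⟩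
  have : NeZero M' := ⟨hM'.ne'⟩
  have : NeZero (2 * M') := ⟨by omega⟩
  have hPB0 : ∀ b, 0 ≤ PB b := fun b => by
    rw [← hPB]; exact Finset.sum_nonneg fun a _ => mul_nonneg (hPA0 a) (hPU0 a b)
  have hAU : ∀ a, ∑ b, PA a * PU a b = PA a := fun a => by
    rw [← Finset.mul_sum, hPU1, mul_one]
  have hPB1 : ∑ b, PB b = 1 := by
    simp_rw [← hPB]
    rw [Finset.sum_comm]
    simp_rw [hAU]
    exact hPA1
  set V : B → A → ℝ := fun b a => PA a * PU a b / PB b with hV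
  have hV0 : ∀ b a, 0 ≤ V b a := fun b a => div_nonneg (mul_nonneg (hPA0 a) (hPU0 a b)) (hPB0 b)
  have hVq : ∀ b a, PB b * V b a = PA a * PU a b := by
    intro b a
    rcases (hPB0 b).eq_or_lt with h | h
    · have hz := (Finset.sum_eq_zero_iff_of_nonneg
        (fun a _ => mul_nonneg (hPA0 a) (hPU0 a b))).1 ((hPB b).trans h.symm) a (Finset.mem_univ a)
      rw [← h, zero_mul, hz]
    · simp only [hV]; field_simp
  have hp0 : ∀ a b x, 0 ≤ PA a * PU a b * W b a x := fun a b x =>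
    mul_nonneg (mul_nonneg (hPA0 a) (hPU0 a b)) (hW0 b a x)
  -- information-density bad events
  have hbad1 : (∑ b, ∑ a, if τ1 * PA a < V b a then PB b * V b a else 0) ≤ β := by
    refine le_trans ?_ h1
    rw [Finset.sum_comm]
    refine Finset.sum_le_sum fun a _ => Finset.sum_le_sum fun b _ => ?_
    have hcol : (∑ x, if τ1 * PA a * PB b < PA a * PU a b then PA a * PU a b * W b a x else 0)
        = if τ1 * PA a * PB b < PA a * PU a b then PA a * PU a b else 0 := by
      split_ifs
      · rw [← Finset.mul_sum, hW1, mul_one]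
      · simp
    rw [hcol, hVq]
    have hnn : 0 ≤ PA a * PU a b := mul_nonneg (hPA0 a) (hPU0 a b)
    rcases (hPB0 b).eq_or_lt with h | h
    · have : PA a * PU a b = 0 := by rw [← hVq, ← h, zero_mul]
      rw [this]; simp
    · have : (τ1 * PA a < V b a) → τ1 * PA a * PB b < PA a * PU a b := by
        intro hh
        rw [← hVq, mul_comm (PB b)]
        exact mul_lt_mul_of_pos_right hh h
      split_ifs with ha hb
      · exact le_rfl
      · exact absurd (this ha) hb
      · exact hnn
      · exact le_rfl
  have hbad2 : (∑ b, ∑ z : A × C, if τ2 * T z.1 z.2 < V b z.1 * W b z.1 z.2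
      then PB b * (V b z.1 * W b z.1 z.2) else 0) ≤ β := by
    refine le_trans ?_ h2
    rw [Finset.sum_comm, Fintype.sum_prod_type]
    refine Finset.sum_le_sum fun a _ => ?_
    rw [Finset.sum_comm]
    refine Finset.sum_le_sum fun b _ => Finset.sum_le_sum fun x _ => ?_
    have e1 : PB b * (V b a * W b a x) = PA a * PU a b * W b a x := by rw [← hVq]; ring
    simp only
    rw [e1]
    rcases (hPB0 b).eq_or_lt with h | h
    · have : PA a * PU a b = 0 := by rw [← hVq, ← h, zero_mul]
      rw [this]; simp
    · have : (τ2 * T a x < V b a * W b a x) → τ2 * T a x * PB b < PA a * PU a b * W b a x := by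
        intro hh
        rw [← e1, mul_comm (PB b)]
        exact mul_lt_mul_of_pos_right hh h
      split_ifs with ha hb
      · exact le_rfl
      · exact absurd (this ha) hb
      · exact hp0 a b x
      · exact le_rfl
  set Q : B → C → ℝ := fun b x => ∑ a, V b a * W b a x with hQd
  have hQ0 : ∀ b x, 0 ≤ Q b x := fun b x =>
    Finset.sum_nonneg fun a _ => mul_nonneg (hV0 b a) (hW0 b a x)
  have hQq : ∀ b x, PB b * Q b x = PBC b x := by
    intro b x
    rw [← hPBC, hQd]
    simp only
    rw [Finset.mul_sum]
    refine Finset.sum_congr rfl fun a _ => ?_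
    rw [← hVq]; ring
  have hQPC : ∀ x, ∑ b, PB b * Q b x = PC x := fun x => by simp_rw [hQq]; exact hPC x
  have hPC1 : ∑ x, PC x = 1 := by
    simp_rw [← hPC, ← hPBC]
    rw [Finset.sum_comm]
    rw [← hPB1]
    refine Finset.sum_congr rfl fun b _ => ?_
    rw [Finset.sum_comm, ← hPB]
    refine Finset.sum_congr rfl fun a _ => ?_
    rw [← Finset.mul_sum, hW1, mul_one]
  have hbad3 : (∑ b, ∑ x, if Q b x ≤ τ3 * PC x then PB b * Q b x else 0) ≤ β := by
    refine le_trans ?_ h3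
    rw [Finset.sum_comm (s := (Finset.univ : Finset A))]
    refine Finset.sum_le_sum fun b _ => ?_
    rw [Finset.sum_comm (s := (Finset.univ : Finset A))]
    refine Finset.sum_le_sum fun x _ => ?_
    rw [hQq]
    have : Q b x ≤ τ3 * PC x → PBC b x ≤ τ3 * PC x * PB b := by
      intro hh
      rw [← hQq, mul_comm (PB b)]
      exact mul_le_mul_of_nonneg_right hh (hPB0 b)
    split_ifs with ha hb
    · rw [hPBC]
    · exact absurd (this ha) hb
    · exact Finset.sum_nonneg fun a _ => hp0 a b x
    · simp
  have hT1 : ∑ z : A × C, T z.1 z.2 = 1 := by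
    rw [Fintype.sum_prod_type]
    simp_rw [← hT]
    rw [← hPA1]
    refine Finset.sum_congr rfl fun a _ => ?_
    rw [Finset.sum_comm]
    refine Eq.trans ?_ (hAU a)
    refine Finset.sum_congr rfl fun b _ => ?_
    rw [← Finset.mul_sum, hW1, mul_one]
  let J := Fin (2 * M') × Fin K × Fin L
  let D1 : (J → B) → Fin (2 * M') → Fin K → ℝ := fun c m k =>
    ∑ a, |PA a - (∑ l, V (c (m, k, l)) a) / Fintype.card (Fin L)|
  let D2 : (J → B) → Fin (2 * M') → ℝ := fun c m =>
    ∑ z : A × C, |T z.1 z.2 - (∑ i : Fin K × Fin L, V (c (m, i)) z.1 * W (c (m, i)) z.1 z.2)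
      / Fintype.card (Fin K × Fin L)|
  let EI : (J → B) → Fin (2 * M') → ℝ := fun c m => ((∑ k, ∑ l, ∑ x,
        ((if Q (c (m, k, l)) x ≤ τ3 * PC x then Q (c (m, k, l)) x else 0)
        + ∑ m', ∑ l', if m' ≠ m then
            Q (c (m, k, l)) x * (if τ3 * PC x < Q (c (m', k, l')) x then 1 else 0) else 0))
        / (Fintype.card (Fin K) * Fintype.card (Fin L)))
  have hKr : (0 : ℝ) < K := by exact_mod_cast hK
  have hLr : (0 : ℝ) < L := by exact_mod_cast hL
  have ED1 : ∀ m k, ∑ c : J → B, cwWt PB c * D1 c m k ≤ 3 * β := by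
    intro m k
    have h := soft_cover hPB0 hPB1 V hV0 PA (fun a => by simp_rw [hVq]; exact hAU a) hPA1
      (fun l : Fin L => ((m, k, l) : J)) (fun l l' h => by simpa using h) hτ1.le hβ
    refine h.trans ?_
    rw [Fintype.card_fin]
    have : τ1 / (2 * β * L) ≤ β / 2 := by
      have e : τ1 / (2 * β * L) = (τ1 / L) / (2 * β) := by field_simp
      rw [e, div_le_iff₀ (by positivity)]
      nlinarith
    linarith
  have ED2 : ∀ m, ∑ c : J → B, cwWt PB c * D2 c m ≤ 3 * β := by
    intro m
    have h := soft_cover hPB0 hPB1 (fun b (z : A × C) => V b z.1 * W b z.1 z.2)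
      (fun b z => mul_nonneg (hV0 _ _) (hW0 _ _ _)) (fun z => T z.1 z.2)
      (fun z => by simp_rw [← mul_assoc, hVq]; exact hT z.1 z.2) hT1
      (fun i : Fin K × Fin L => ((m, i) : J)) (fun l l' h => by simpa using h) hτ2.le hβ
    refine h.trans ?_
    rw [Fintype.card_prod, Fintype.card_fin, Fintype.card_fin, Nat.cast_mul]
    have : τ2 / (2 * β * (K * L)) ≤ β / 2 := by
      have e : τ2 / (2 * β * (K * L)) = (τ2 / (K * L)) / (2 * β) := by field_simp
      rw [e, div_le_iff₀ (by positivity)]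
      nlinarith
    linarith
  have EEI : ∀ m, ∑ c : J → B, cwWt PB c * EI c m ≤ 2 * β := by
    intro m
    have h := decode_bound (K := Fin K) (L := Fin L) hPB0 hPB1 Q hQ0 PC hQPC hPC1 hτ3 m
    refine h.trans ?_
    rw [Fintype.card_fin, Fintype.card_fin]
    linarith
  let score : (J → B) → Fin (2 * M') → ℝ := fun c m =>
    EI c m + (3 / 2) * ((∑ k, D1 c m k) / K) + (1 / 2) * D2 c m
  have hD10 : ∀ c m k, 0 ≤ D1 c m k := fun c m k => Finset.sum_nonneg fun a _ => abs_nonneg _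
  have hD20 : ∀ c m, 0 ≤ D2 c m := fun c m => Finset.sum_nonneg fun a _ => abs_nonneg _
  have hEI0 : ∀ c m, 0 ≤ EI c m := by
    intro c m
    refine div_nonneg (Finset.sum_nonneg fun k _ => Finset.sum_nonneg fun l _ =>
      Finset.sum_nonneg fun x _ => add_nonneg ?_ (Finset.sum_nonneg fun m' _ =>
      Finset.sum_nonneg fun l' _ => ?_)) (by positivity)
    · split_ifs; exacts [hQ0 _ _, le_rfl]
    · have := hQ0 (c (m, k, l)) x
      split_ifs <;> simp [this]
  have hD1a : ∀ c m, 0 ≤ (∑ k, D1 c m k) / K := fun c m =>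
    div_nonneg (Finset.sum_nonneg fun k _ => hD10 c m k) hKr.le
  have hscore0 : ∀ c m, 0 ≤ score c m := fun c m => by
    have := hD20 c m
    have := hEI0 c m
    have := hD1a c m
    simp only [score]; positivity
  have Escore : ∑ c : J → B, cwWt PB c * ∑ m, score c m ≤ (2 * M' : ℕ) * (8 * β) := by
    simp_rw [Finset.mul_sum]
    rw [Finset.sum_comm]
    have : ∀ m, ∑ c : J → B, cwWt PB c * score c m ≤ 8 * β := by
      intro m
      have e : ∑ c : J → B, cwWt PB c * score c m = ∑ c : J → B, cwWt PB c * EI c m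
          + (3 / 2) * ((∑ k, ∑ c : J → B, cwWt PB c * D1 c m k) / K)
          + (1 / 2) * ∑ c : J → B, cwWt PB c * D2 c m := by
        rw [Finset.sum_comm (s := (Finset.univ : Finset (Fin K)))]
        rw [Finset.sum_div, Finset.mul_sum, Finset.mul_sum, ← Finset.sum_add_distrib,
          ← Finset.sum_add_distrib]
        refine Finset.sum_congr rfl fun c _ => ?_
        simp only [score]
        rw [← Finset.mul_sum]
        ring
      rw [e]
      have hh : (∑ k, ∑ c : J → B, cwWt PB c * D1 c m k) / K ≤ 3 * β := by
        rw [div_le_iff₀ hKr]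
        calc _ ≤ ∑ k : Fin K, 3 * β := Finset.sum_le_sum fun k _ => ED1 m k
          _ = _ := by simp; ring
      linarith [EEI m, ED2 m]
    calc _ ≤ ∑ m : Fin (2 * M'), 8 * β := Finset.sum_le_sum fun m _ => this m
      _ = _ := by simp
  obtain ⟨c, hc⟩ := exists_codebook (fun c : J → B => cwWt PB c) (fun c => ∑ m, score c m)
    (cwWt_nonneg hPB0) (cwWt_sum hPB1) Escore
  obtain ⟨e, he, hesc⟩ := expurgate (score c) (hscore0 c) (by positivity) hc
  obtain ⟨g, hg⟩ := exists_decoder Q hQ0 (fun x => τ3 * PC x) c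
  choose f hf0 hf1 hferr hftv using fun m => det_compare PA W T hW0 hW1 V hV0
    (fun (k : Fin K) (l : Fin L) => c (m, k, l))
  refine ⟨fun a m k b => f (e m) a k b, fun x k => if h : ∃ m, e m = g x k then h.choose else 0,
    fun a m k b => hf0 _ _ _ _, fun a m k => hf1 _ _ _, ?_, ?_⟩
  · intro m
    have h := hferr (e m) (fun x k => g x k ≠ e m)
    simp only [Fintype.card_fin] at h
    have hs := hesc m
    have hE : (∑ k, ∑ l, ∑ x, if g x k ≠ e m then ∑ a, V (c (e m, k, l)) a * W (c (e m, k, l)) a x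
        else 0) / ((K : ℝ) * L) ≤ EI c (e m) := by
      simp only [EI, Fintype.card_fin]
      gcongr with k _ l _ x _
      exact hg (e m) k l x
    have hD : (∑ k, ∑ a, |PA a - (∑ l, V (c (e m, k, l)) a) / (L : ℝ)|) / (K : ℝ)
        = (∑ k, D1 c (e m) k) / K := by
      simp only [D1, Fintype.card_fin]
    rw [hD] at h
    have hb : ∑ k, ∑ a, ∑ b, ∑ x, (if g x k ≠ e m then
        PA a * (1 / (K : ℝ)) * f (e m) a k b * W b a x else 0) ≤ 16 * β := by
      have := hD1a c (e m)
      have := hD20 c (e m)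
      simp only [score] at hs
      linarith
    refine le_trans ?_ hb
    refine Finset.sum_le_sum fun k _ => Finset.sum_le_sum fun a _ => Finset.sum_le_sum fun b _ =>
      Finset.sum_le_sum fun x _ => ?_
    have hnn : 0 ≤ PA a * (1 / (K : ℝ)) * f (e m) a k b * W b a x :=
      mul_nonneg (mul_nonneg (mul_nonneg (hPA0 a) (by positivity)) (hf0 _ _ _ _)) (hW0 _ _ _)
    by_cases hgm : g x k = e m
    · have hex : ∃ m, e m = g x k := ⟨m, hgm.symm⟩
      have : hex.choose = m := he (hex.choose_spec.trans hgm)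
      beta_reduce
      rw [dif_pos hex, this]
      simp [hgm]
    · rw [if_pos hgm]
      split_ifs
      all_goals first | exact le_rfl | exact hnn
  · intro m
    have h := hftv (e m)
    simp only [Fintype.card_fin] at h
    have hs := hesc m
    have hD : (∑ k, ∑ a, |PA a - (∑ l, V (c (e m, k, l)) a) / (L : ℝ)|) / (K : ℝ)
        = (∑ k, D1 c (e m) k) / K := by
      simp only [D1, Fintype.card_fin]
    have hDD : ∑ a, ∑ x, |T a x - (∑ k, ∑ l, V (c (e m, k, l)) a * W (c (e m, k, l)) a x)
            / ((K : ℝ) * L)| = D2 c (e m) := by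
      simp only [D2, Fintype.card_fin, Fintype.card_prod, Fintype.sum_prod_type, Nat.cast_mul]
    rw [hD, hDD] at h
    have := hD1a c (e m)
    have := hEI0 c (e m)
    simp only [score] at hs
    linarith

lemma sum_pushf_mul {α β : Type*} [Fintype α] [Fintype β] (p : α → ℝ) (f : α → β) (G : β → ℝ) :
    ∑ b, pushf p f b * G b = ∑ a, p a * G (f a) := by
  unfold pushf
  simp_rw [Finset.sum_mul]
  rw [Finset.sum_comm]
  refine Finset.sum_congr rfl fun a _ => ?_
  simp [ite_mul]

lemma entRV_eq {α β : Type*} [Fintype α] [Fintype β] (p : α → ℝ) (f : α → β) :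
    entRV p f = -∑ a, p a * Real.logb 2 (pushf p f (f a)) := by
  unfold entRV ent
  rw [sum_pushf_mul p f (fun b => Real.logb 2 (pushf p f b))]

lemma pushf_nonneg {α β : Type*} [Fintype α] {p : α → ℝ} (hp : ∀ a, 0 ≤ p a)
    (f : α → β) (b : β) : 0 ≤ pushf p f b :=
  Finset.sum_nonneg fun a _ => by split_ifs; exacts [hp a, le_rfl]

lemma le_pushf {α β : Type*} [Fintype α] {p : α → ℝ} (hp : ∀ a, 0 ≤ p a)
    (f : α → β) (a : α) : p a ≤ pushf p f (f a) := by
  unfold pushf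
  calc p a = (if f a = f a then p a else 0) := by simp
    _ ≤ _ := Finset.single_le_sum (f := fun a' => if f a' = f a then p a' else 0)
      (fun a' _ => by beta_reduce; split_ifs; exacts [hp a', le_rfl]) (Finset.mem_univ a)

lemma pushf_marg {α β γ : Type*} [Fintype α] [Fintype β] (p : α → ℝ) (f : α → β) (h : α → γ)
    (d : γ) : ∑ b, pushf p (fun a => (f a, h a)) (b, d) = pushf p h d := by
  unfold pushf
  rw [Finset.sum_comm]
  refine Finset.sum_congr rfl fun a _ => ?_
  simp only [Prod.mk.injEq, ite_and]
  simp

lemma cmi_eq {α β γ δ : Type*} [Fintype α] [Fintype β] [Fintype γ] [Fintype δ]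
    (p : α → ℝ) (f : α → β) (g : α → γ) (h : α → δ) :
    cmi p f g h = ∑ a, p a * (Real.logb 2 (pushf p (fun a => (f a, g a, h a)) (f a, g a, h a))
      + Real.logb 2 (pushf p h (h a)) - Real.logb 2 (pushf p (fun a => (f a, h a)) (f a, h a))
      - Real.logb 2 (pushf p (fun a => (g a, h a)) (g a, h a))) := by
  unfold cmi
  simp_rw [entRV_eq, mul_sub, mul_add, Finset.sum_sub_distrib, Finset.sum_add_distrib]
  ring

lemma mi_eq {α β γ : Type*} [Fintype α] [Fintype β] [Fintype γ]
    (p : α → ℝ) (f : α → β) (g : α → γ) :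
    mi p f g = ∑ a, p a * (Real.logb 2 (pushf p (fun a => (f a, g a)) (f a, g a))
      - Real.logb 2 (pushf p f (f a)) - Real.logb 2 (pushf p g (g a))) := by
  unfold mi
  simp_rw [entRV_eq, mul_sub, Finset.sum_sub_distrib]
  ring

lemma cmi_nonneg {α β γ δ : Type*} [Fintype α] [Fintype β] [Fintype γ] [Fintype δ]
    {p : α → ℝ} (hp0 : ∀ a, 0 ≤ p a) (hp1 : ∑ a, p a = 1) (f : α → β) (g : α → γ) (h : α → δ) :
    0 ≤ cmi p f g h := by
  rw [cmi_eq]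
  set F := pushf p (fun a => (f a, g a, h a)) with hF
  set H := pushf p h with hH
  set FH := pushf p (fun a => (f a, h a)) with hFH
  set GH := pushf p (fun a => (g a, h a)) with hGH
  have hln2 : 0 < Real.log 2 := Real.log_pos (by norm_num)
  have hpt : ∀ a, (p a - p a * (FH (f a, h a) * GH (g a, h a) / (F (f a, g a, h a) * H (h a))))
      / Real.log 2 ≤ p a * (Real.logb 2 (F (f a, g a, h a))
      + Real.logb 2 (H (h a)) - Real.logb 2 (FH (f a, h a))
      - Real.logb 2 (GH (g a, h a))) := by
    intro a
    rcases (hp0 a).eq_or_lt with h0 | hpos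
    · rw [← h0]; simp
    · have p1 : 0 < F (f a, g a, h a) :=
        hpos.trans_le (le_pushf hp0 (fun a => (f a, g a, h a)) a)
      have p2 : 0 < H (h a) := hpos.trans_le (le_pushf hp0 h a)
      have p3 : 0 < FH (f a, h a) := hpos.trans_le (le_pushf hp0 (fun a => (f a, h a)) a)
      have p4 : 0 < GH (g a, h a) := hpos.trans_le (le_pushf hp0 (fun a => (g a, h a)) a)
      have hl := Real.log_le_sub_one_of_pos (x := FH (f a, h a) * GH (g a, h a)
        / (F (f a, g a, h a) * H (h a))) (by positivity)
      rw [Real.log_div (by positivity) (by positivity), Real.log_mul p3.ne' p4.ne',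
        Real.log_mul p1.ne' p2.ne'] at hl
      rw [div_le_iff₀ hln2]
      have e : p a * (Real.logb 2 (F (f a, g a, h a))
        + Real.logb 2 (H (h a)) - Real.logb 2 (FH (f a, h a))
        - Real.logb 2 (GH (g a, h a))) * Real.log 2 = p a * (Real.log (F (f a, g a, h a))
        + Real.log (H (h a)) - Real.log (FH (f a, h a))
        - Real.log (GH (g a, h a))) := by
        simp only [Real.logb]; field_simp
      rw [e]
      nlinarith
  refine le_trans ?_ (Finset.sum_le_sum fun a _ => hpt a)
  rw [← Finset.sum_div]
  refine div_nonneg ?_ hln2.le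
  rw [Finset.sum_sub_distrib, hp1, sub_nonneg]
  rw [← sum_pushf_mul p (fun a => (f a, g a, h a)) (fun z => FH (z.1, z.2.2) * GH (z.2.1, z.2.2) /
    (F z * H z.2.2)), ← hF]
  have hFH0 : ∀ z, 0 ≤ FH z := pushf_nonneg hp0 _
  have hGH0 : ∀ z, 0 ≤ GH z := pushf_nonneg hp0 _
  have hH0 : ∀ z, 0 ≤ H z := pushf_nonneg hp0 _
  have hF0 : ∀ z, 0 ≤ F z := pushf_nonneg hp0 _
  calc _ ≤ ∑ z : β × γ × δ, FH (z.1, z.2.2) * GH (z.2.1, z.2.2) / H z.2.2 := by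
        refine Finset.sum_le_sum fun z _ => ?_
        have h1 := div_nonneg (mul_nonneg (hFH0 (z.1, z.2.2)) (hGH0 (z.2.1, z.2.2))) (hH0 z.2.2)
        rcases (hF0 z).eq_or_lt with h0 | hpos
        · rw [← h0, zero_mul]; exact h1
        · apply le_of_eq
          rw [mul_comm (F z) (H z.2.2), ← div_div, mul_div_cancel₀ _ hpos.ne']
    _ = ∑ d, H d := by
        rw [Fintype.sum_prod_type]
        simp_rw [Fintype.sum_prod_type]
        have : ∀ b, ∑ c, ∑ d, FH (b, d) * GH (c, d) / H d = ∑ d, FH (b, d) * (H d / H d) := by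
          intro b
          rw [Finset.sum_comm]
          refine Finset.sum_congr rfl fun d _ => ?_
          rw [← Finset.sum_div, ← Finset.mul_sum, hGH, pushf_marg, mul_div_assoc]
        simp_rw [this]
        rw [Finset.sum_comm]
        refine Finset.sum_congr rfl fun d _ => ?_
        rw [← Finset.sum_mul, hFH, pushf_marg, ← hH]
        rcases eq_or_ne (H d) 0 with h0 | h0
        · rw [h0, zero_mul]
        · rw [div_self h0, mul_one]
    _ = 1 := by
        have := sum_pushf_mul p h (fun _ => 1)
        simpa [hp1] using this
    _ ≤ 1 := le_rfl

lemma mi_nonneg {α β γ : Type*} [Fintype α] [Fintype β] [Fintype γ]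
    {p : α → ℝ} (hp0 : ∀ a, 0 ≤ p a) (hp1 : ∑ a, p a = 1) (f : α → β) (g : α → γ) :
    0 ≤ mi p f g := by
  have h := cmi_nonneg hp0 hp1 f g (fun _ => ())
  have e : cmi p f g (fun _ => ()) = mi p f g := by
    rw [cmi_eq, mi_eq]
    refine Finset.sum_congr rfl fun a _ => ?_
    simp only [pushf, Prod.mk.injEq, and_true, if_true, hp1, Real.logb_one]
    ring
  rwa [e] at h

lemma two_pow_prod_lt {n : ℕ} (d1 d2 num : Fin n → ℝ) (h1 : ∀ t, 0 < d1 t) (h2 : ∀ t, 0 < d2 t)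
    (h3 : ∀ t, 0 < num t) (r : ℝ) :
    ((2 : ℝ) ^ r * (∏ t, d1 t) * (∏ t, d2 t) < ∏ t, num t) ↔
      r < ∑ t, (Real.logb 2 (num t) - Real.logb 2 (d2 t) - Real.logb 2 (d1 t)) := by
  have p1 : 0 < ∏ t, d1 t := Finset.prod_pos fun t _ => h1 t
  have p2 : 0 < ∏ t, d2 t := Finset.prod_pos fun t _ => h2 t
  have p3 : 0 < ∏ t, num t := Finset.prod_pos fun t _ => h3 t
  have p0 : (0 : ℝ) < 2 ^ r := by positivity
  rw [← Real.logb_lt_logb_iff (b := 2) (by norm_num) (by positivity) p3,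
    Real.logb_mul (by positivity) p2.ne', Real.logb_mul p0.ne' p1.ne',
    Real.logb_rpow (by norm_num) (by norm_num), Real.logb_prod _ _ (fun t _ => (h1 t).ne'),
    Real.logb_prod _ _ (fun t _ => (h2 t).ne'), Real.logb_prod _ _ (fun t _ => (h3 t).ne'),
    Finset.sum_sub_distrib, Finset.sum_sub_distrib]
  constructor <;> intro h <;> linarith

lemma bad_le {S U X : Type*} [Fintype S] [Fintype U] [Fintype X]
    (PS : S → ℝ) (PU : S → U → ℝ) (W : U → S → X → ℝ) {p : S × U × X → ℝ}
    (hp : ∀ z, p z = PS z.1 * PU z.1 z.2.1 * W z.2.1 z.1 z.2.2) (hp0 : ∀ z, 0 ≤ p z)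
    {n : ℕ} {β : ℝ}
    (Bad : (Fin n → S) → (Fin n → U) → (Fin n → X) → Prop) [∀ a b x, Decidable (Bad a b x)]
    (G : (Fin n → S × U × X) → Prop) [∀ w, Decidable (G w)]
    (hBG : ∀ w : Fin n → S × U × X, (∀ t, 0 < p (w t)) →
      Bad (fun t => (w t).1) (fun t => (w t).2.1) (fun t => (w t).2.2) → G w)
    (hG : ∑ w : Fin n → S × U × X, (if G w then cwWt p w else 0) ≤ β) :
    (∑ a : Fin n → S, ∑ b : Fin n → U, ∑ x : Fin n → X, if Bad a b x then
      (∏ t, PS (a t)) * (∏ t, PU (a t) (b t)) * (∏ t, W (b t) (a t) (x t)) else 0) ≤ β := by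
  let E : (Fin n → S) × (Fin n → U) × (Fin n → X) ≃ (Fin n → S × U × X) :=
    { toFun := fun z t => (z.1 t, z.2.1 t, z.2.2 t)
      invFun := fun w => (fun t => (w t).1, fun t => (w t).2.1, fun t => (w t).2.2)
      left_inv := fun _ => rfl
      right_inv := fun _ => rfl }
  refine le_trans ?_ hG
  rw [← Equiv.sum_comp E]
  simp_rw [Fintype.sum_prod_type]
  refine Finset.sum_le_sum fun a _ => Finset.sum_le_sum fun b _ => Finset.sum_le_sum fun x _ => ?_
  have e : (∏ t, PS (a t)) * (∏ t, PU (a t) (b t)) * (∏ t, W (b t) (a t) (x t))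
      = cwWt p (E (a, b, x)) := by
    unfold cwWt
    rw [← Finset.prod_mul_distrib, ← Finset.prod_mul_distrib]
    refine Finset.prod_congr rfl fun t _ => ?_
    rw [hp]
    simp [E]
  rw [e]
  have hw := cwWt_nonneg hp0 (E (a, b, x))
  rcases hw.eq_or_lt with h0 | hpos
  · rw [← h0]; simp
  · have hall : ∀ t, 0 < p (E (a, b, x) t) := by
      intro t
      refine lt_of_le_of_ne (hp0 _) fun h => hpos.ne' ?_
      exact Finset.prod_eq_zero (Finset.mem_univ t) h.symm
    have := hBG (E (a, b, x)) hall
    split_ifs with hb hg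
    · exact le_rfl
    · exact absurd (this hb) hg
    · exact hw
    · exact le_rfl

lemma params {R RK I1 I2 I3 δ β : ℝ} (hR : 0 ≤ R) (hI1 : 0 ≤ I1) (hI2 : 0 ≤ I2) (hRK : I2 < RK)
    (hδ : 0 < δ) (hI3 : R + I1 + 4 * δ = I3) (n : ℕ)
    (hy1 : 8 * (2 : ℝ) ^ (-(n * δ)) ≤ β) (hy2 : 8 * (2 : ℝ) ^ (-(n * δ)) ≤ β ^ 2) :
    ∃ M K L : ℕ, 0 < M ∧ 0 < K ∧ 0 < L ∧ (2 : ℝ) ^ ((n : ℝ) * R) ≤ M ∧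
      (K : ℝ) ≤ (2 : ℝ) ^ ((n : ℝ) * RK) ∧
      (2 : ℝ) ^ (n * (I1 + δ)) / L ≤ β ^ 2 ∧
      (2 : ℝ) ^ (n * (I1 + I2 + δ)) / (K * L) ≤ β ^ 2 ∧
      (2 * M : ℕ) * L / (2 : ℝ) ^ (n * (I3 - δ)) ≤ β := by
  have hn : (0 : ℝ) ≤ n := n.cast_nonneg
  set y := (2 : ℝ) ^ (-(n * δ)) with hy
  have hy0 : 0 < y := by positivity
  set xM := (2 : ℝ) ^ ((n : ℝ) * R) with hxM
  set xK := (2 : ℝ) ^ ((n : ℝ) * RK) with hxK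
  set xL := (2 : ℝ) ^ ((n : ℝ) * (I1 + 2 * δ)) with hxL
  have one_le : ∀ r : ℝ, 0 ≤ r → (1 : ℝ) ≤ 2 ^ ((n : ℝ) * r) := fun r hr =>
    Real.one_le_rpow (by norm_num) (mul_nonneg hn hr)
  have hM1 : 1 ≤ xM := one_le R hR
  have hK1 : 1 ≤ xK := one_le RK (by linarith)
  have hL1 : 1 ≤ xL := one_le _ (by linarith)
  have hMlo := Nat.le_ceil xM
  have hMhi := Nat.ceil_lt_add_one (by linarith : 0 ≤ xM)
  have hLlo := Nat.le_ceil xL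
  have hLhi := Nat.ceil_lt_add_one (by linarith : 0 ≤ xL)
  have hKlo := Nat.lt_floor_add_one xK
  have hKhi := Nat.floor_le (by linarith : 0 ≤ xK)
  have hKpos : 0 < ⌊xK⌋₊ := Nat.floor_pos.2 hK1
  have hKpos' : (1 : ℝ) ≤ ⌊xK⌋₊ := by exact_mod_cast hKpos
  refine ⟨⌈xM⌉₊, ⌊xK⌋₊, ⌈xL⌉₊, Nat.ceil_pos.2 (by linarith), hKpos, Nat.ceil_pos.2 (by linarith),
    hMlo, hKhi, ?_, ?_, ?_⟩
  · have e : (2 : ℝ) ^ (n * (I1 + δ)) = y * xL := by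
      rw [hy, hxL, ← Real.rpow_add (by norm_num)]; congr 1; ring
    rw [e, div_le_iff₀ (by linarith)]
    calc y * xL ≤ β ^ 2 * xL := by gcongr; linarith
      _ ≤ _ := by gcongr
  · have e : (2 : ℝ) ^ (n * (I1 + I2 + δ)) ≤ y * (xK * xL) := by
      rw [hy, hxL, hxK, ← Real.rpow_add (by norm_num), ← Real.rpow_add (by norm_num)]
      apply Real.rpow_le_rpow_of_exponent_le (by norm_num)
      nlinarith
    have hKL : xK * xL ≤ 2 * (⌊xK⌋₊ * ⌈xL⌉₊) := by
      calc xK * xL ≤ (2 * ⌊xK⌋₊) * ⌈xL⌉₊ := by gcongr; linarith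
        _ = _ := by ring
    rw [div_le_iff₀ (by nlinarith)]
    calc _ ≤ y * (xK * xL) := e
      _ ≤ y * (2 * (⌊xK⌋₊ * ⌈xL⌉₊)) := by gcongr
      _ = (2 * y) * (⌊xK⌋₊ * ⌈xL⌉₊) := by ring
      _ ≤ _ := by gcongr; linarith
  · rw [div_le_iff₀ (by positivity)]
    have e : xM * xL = y * (2 : ℝ) ^ (n * (I3 - δ)) := by
      rw [hy, hxL, hxM, ← Real.rpow_add (by norm_num), ← Real.rpow_add (by norm_num)]
      congr 1
      rw [← hI3]; ring
    push_cast
    calc (2 * (⌈xM⌉₊ : ℝ)) * ⌈xL⌉₊ ≤ (2 * (2 * xM)) * (2 * xL) := by gcongr <;> linarith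
      _ = (8 * y) * (2 : ℝ) ^ (n * (I3 - δ)) := by rw [mul_assoc 8, ← e]; ring
      _ ≤ _ := by gcongr

/-- **Achievability part of Theorem 1** (covert multi-bit watermarking capacity with
non-causal state).  For any auxiliary conditional pmfs `PU = P_{U|S}` and `W = W_{X|U,S}`
satisfying the marginal constraint, any message rate `R < I(U;X) - I(U;S)` and any key
rate `RK > I(U;X|S)` are achievable: for every `ε > 0` there is a blocklength `n`, a
message set of size at least `2^{nR}`, a key set of size at most `2^{nRK}`, a stochastic
encoder and a decoder such that the average error probability is at most `ε` and, for
every message `m`, the total variation between the induced joint law of `(X^n, S^n)`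
given `M = m` (averaged over the key) and the base law `(P_{X|S} P_S)^{⊗n}` is at
most `ε`. -/
theorem covert_watermarking_achievability
    {S U X : Type*} [Fintype S] [Fintype U] [Fintype X]
    (PS : S → ℝ) (PXgS : S → X → ℝ) (PU : S → U → ℝ) (W : U → S → X → ℝ)
    (hPS0 : ∀ s, 0 ≤ PS s) (hPS1 : ∑ s, PS s = 1)
    (hPX0 : ∀ s x, 0 ≤ PXgS s x) (hPX1 : ∀ s, ∑ x, PXgS s x = 1)
    (hPU0 : ∀ s u, 0 ≤ PU s u) (hPU1 : ∀ s, ∑ u, PU s u = 1)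
    (hW0 : ∀ u s x, 0 ≤ W u s x) (hW1 : ∀ u s, ∑ x, W u s x = 1)
    (hmarg : ∀ s, 0 < PS s → ∀ x, ∑ u, PU s u * W u s x = PXgS s x)
    (R RK ε : ℝ) (hε : 0 < ε)
    (hR : R < mi (fun z : S × U × X => PS z.1 * PU z.1 z.2.1 * W z.2.1 z.1 z.2.2)
            (fun z => z.2.1) (fun z => z.2.2)
          - mi (fun z : S × U × X => PS z.1 * PU z.1 z.2.1 * W z.2.1 z.1 z.2.2)
            (fun z => z.2.1) (fun z => z.1))
    (hRK : RK > cmi (fun z : S × U × X => PS z.1 * PU z.1 z.2.1 * W z.2.1 z.1 z.2.2)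
            (fun z => z.2.1) (fun z => z.2.2) (fun z => z.1)) :
    ∃ (n Mn Kn : ℕ), 0 < n ∧ 0 < Mn ∧ 0 < Kn ∧
      (2 : ℝ) ^ ((n : ℝ) * R) ≤ (Mn : ℝ) ∧ (Kn : ℝ) ≤ (2 : ℝ) ^ ((n : ℝ) * RK) ∧
      ∃ (f : (Fin n → S) → Fin Mn → Fin Kn → (Fin n → U) → ℝ)
        (g : (Fin n → X) → Fin Kn → Fin Mn),
        (∀ sn m k un, 0 ≤ f sn m k un) ∧ (∀ sn m k, ∑ un, f sn m k un = 1) ∧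
        -- the joint law of (Sⁿ, M, K, Uⁿ, Xⁿ): Sⁿ ~ P_S^{⊗n}, M and K uniform and
        -- independent, Uⁿ ~ f(Sⁿ,M,K), and Xⁿ generated memorylessly from W
        (let joint : (Fin n → S) × Fin Mn × Fin Kn × (Fin n → U) × (Fin n → X) → ℝ :=
          fun z => (∏ t, PS (z.1 t)) * (1 / (Mn : ℝ)) * (1 / (Kn : ℝ))
            * f z.1 z.2.1 z.2.2.1 z.2.2.2.1
            * ∏ t, W (z.2.2.2.1 t) (z.1 t) (z.2.2.2.2 t)
        -- (i) the average probability of decoding error is at most ε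
        (∑ z : (Fin n → S) × Fin Mn × Fin Kn × (Fin n → U) × (Fin n → X),
            if g z.2.2.2.2 z.2.2.1 ≠ z.2.1 then joint z else 0) ≤ ε ∧
        -- (ii) covertness: for every message m, the induced law of (Xⁿ,Sⁿ) given M = m
        -- is ε-close in total variation to the base product law
        (∀ m : Fin Mn,
          TV (fun xs : (Fin n → X) × (Fin n → S) =>
                (Mn : ℝ) * ∑ k, ∑ un, joint (xs.2, m, k, un, xs.1))
             (fun xs : (Fin n → X) × (Fin n → S) =>
                ∏ t, PXgS (xs.2 t) (xs.1 t) * PS (xs.2 t)) ≤ ε)) := by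
  set p : S × U × X → ℝ := fun z => PS z.1 * PU z.1 z.2.1 * W z.2.1 z.1 z.2.2 with hp
  have hp0 : ∀ z, 0 ≤ p z := fun z => mul_nonneg (mul_nonneg (hPS0 _) (hPU0 _ _)) (hW0 _ _ _)
  have hsW : ∀ s u, ∑ x, PS s * PU s u * W u s x = PS s * PU s u := fun s u => by
    rw [← Finset.mul_sum, hW1, mul_one]
  have hsU : ∀ s, ∑ u, PS s * PU s u = PS s := fun s => by
    rw [← Finset.mul_sum, hPU1, mul_one]
  have hp1 : ∑ z, p z = 1 := by
    simp only [hp]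
    simp_rw [Fintype.sum_prod_type, hsW, hsU]
    exact hPS1
  have hT1 : ∀ s x, ∑ u, PS s * PU s u * W u s x = PXgS s x * PS s := by
    intro s x
    simp_rw [mul_assoc]
    rw [← Finset.mul_sum]
    rcases (hPS0 s).eq_or_lt with h | h
    · rw [← h]; ring
    · rw [hmarg s h x]; ring
  have hcmi0 : 0 ≤ cmi p (fun z => z.2.1) (fun z => z.2.2) (fun z => z.1) :=
    cmi_nonneg hp0 hp1 _ _ _
  have hmi0 : 0 ≤ mi p (fun z => z.2.1) (fun z => z.1) := mi_nonneg hp0 hp1 _ _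
  rcases lt_or_ge R 0 with hRneg | hRnn
  · -- trivial regime: a single message and a single key
    refine ⟨1, 1, 1, one_pos, one_pos, one_pos, ?_, ?_,
      fun sn _ _ un => ∏ t, PU (sn t) (un t), fun _ _ => 0,
      fun sn _ _ un => Finset.prod_nonneg fun t _ => hPU0 _ _, ?_, ?_, ?_⟩
    · rw [Nat.cast_one, one_mul]
      exact Real.rpow_le_one_of_one_le_of_nonpos (by norm_num) hRneg.le
    · rw [Nat.cast_one, one_mul]
      exact Real.one_le_rpow (by norm_num) (by linarith)
    · intro sn _ _
      rw [sum_pi_prod (fun t u => PU (sn t) u)]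
      simp [hPU1]
    · refine le_trans (le_of_eq ?_) hε.le
      refine Finset.sum_eq_zero fun z _ => ?_
      rw [if_neg]
      rw [not_not]
      exact Subsingleton.elim _ _
    · intro m
      refine le_trans (le_of_eq ?_) hε.le
      unfold TV
      rw [div_eq_zero_iff]
      left
      refine Finset.sum_eq_zero fun xs _ => ?_
      rw [abs_eq_zero, sub_eq_zero]
      have e : ∀ un : Fin 1 → U, (∏ t, PS (xs.2 t)) * (1 / ((1 : ℕ) : ℝ)) * (1 / ((1 : ℕ) : ℝ))
            * (∏ t, PU (xs.2 t) (un t)) * ∏ t, W (un t) (xs.2 t) (xs.1 t)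
          = ∏ t, (PS (xs.2 t) * PU (xs.2 t) (un t) * W (un t) (xs.2 t) (xs.1 t)) := by
        intro un
        rw [Finset.prod_mul_distrib, Finset.prod_mul_distrib]
        simp
      simp only [e]
      rw [sum_pi_prod (fun t u => PS (xs.2 t) * PU (xs.2 t) u * W u (xs.2 t) (xs.1 t))]
      simp [hT1]
  -- main regime
  set PB1 : U → ℝ := fun u => ∑ s, PS s * PU s u with hPB1
  set PBC1 : U → X → ℝ := fun u x => ∑ s, PS s * PU s u * W u s x with hPBC1
  set PC1 : X → ℝ := fun x => ∑ u, PBC1 u x with hPC1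
  -- single-letter marginals
  have mU : ∀ u, pushf p (fun z => z.2.1) u = PB1 u := by
    intro u
    simp only [pushf, hp, hPB1]
    simp_rw [Fintype.sum_prod_type]
    refine Finset.sum_congr rfl fun s _ => ?_
    rw [Finset.sum_eq_single u]
    · simp only [if_true]; exact hsW s u
    · intro u' _ hu'; simp [hu']
    · simp
  have mS : ∀ s, pushf p (fun z => z.1) s = PS s := by
    intro s
    simp only [pushf, hp]
    simp_rw [Fintype.sum_prod_type]
    rw [Finset.sum_eq_single s]
    · simp only [if_true]; simp_rw [hsW, hsU]
    · intro s' _ hs'; simp [hs']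
    · simp
  have mUS : ∀ u s, pushf p (fun z => (z.2.1, z.1)) (u, s) = PS s * PU s u := by
    intro u s
    simp only [pushf, hp]
    simp_rw [Fintype.sum_prod_type]
    rw [Finset.sum_eq_single s]
    · rw [Finset.sum_eq_single u]
      · simp only [if_true]; exact hsW s u
      · intro u' _ hu'; simp [hu']
      · simp
    · intro s' _ hs'; simp [hs']
    · simp
  have mUX : ∀ u x, pushf p (fun z => (z.2.1, z.2.2)) (u, x) = PBC1 u x := by
    intro u x
    simp only [pushf, hp, hPBC1]
    simp_rw [Fintype.sum_prod_type]
    refine Finset.sum_congr rfl fun s _ => ?_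
    rw [Finset.sum_eq_single u]
    · rw [Finset.sum_eq_single x]
      · simp
      · intro x' _ hx'; simp [hx']
      · simp
    · intro u' _ hu'; simp [hu']
    · simp
  have mX : ∀ x, pushf p (fun z => z.2.2) x = PC1 x := by
    intro x
    rw [← pushf_marg p (fun z => z.2.1) (fun z => z.2.2) x]
    simp only [hPC1]
    exact Finset.sum_congr rfl fun u _ => mUX u x
  have mXS : ∀ x s, pushf p (fun z => (z.2.2, z.1)) (x, s) = PXgS s x * PS s := by
    intro x s
    rw [← hT1]
    simp only [pushf, hp]
    simp_rw [Fintype.sum_prod_type]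
    rw [Finset.sum_eq_single s]
    · refine Finset.sum_congr rfl fun u _ => ?_
      rw [Finset.sum_eq_single x]
      · simp
      · intro x' _ hx'; simp [hx']
      · simp
    · intro s' _ hs'; simp [hs']
    · simp
  have mUXS : ∀ u x s, pushf p (fun z => (z.2.1, z.2.2, z.1)) (u, x, s) = p (s, u, x) := by
    intro u x s
    unfold pushf
    rw [Finset.sum_eq_single (s, u, x)]
    · simp
    · rintro ⟨s', u', x'⟩ _ hne
      rw [if_neg]
      intro h
      simp only [Prod.mk.injEq] at h
      exact hne (by simp [h.1, h.2.1, h.2.2])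
    · simp
  set I1 := mi p (fun z => z.2.1) (fun z => z.1) with hI1
  set I2 := cmi p (fun z => z.2.1) (fun z => z.2.2) (fun z => z.1) with hI2
  set I3 := mi p (fun z => z.2.1) (fun z => z.2.2) with hI3
  -- information densities
  let i1 : S × U × X → ℝ := fun z => Real.logb 2 (PS z.1 * PU z.1 z.2.1)
    - Real.logb 2 (PB1 z.2.1) - Real.logb 2 (PS z.1)
  let i2 : S × U × X → ℝ := fun z => Real.logb 2 (p z)
    - Real.logb 2 (PB1 z.2.1) - Real.logb 2 (PXgS z.1 z.2.2 * PS z.1)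
  let i3 : S × U × X → ℝ := fun z => Real.logb 2 (PBC1 z.2.1 z.2.2)
    - Real.logb 2 (PB1 z.2.1) - Real.logb 2 (PC1 z.2.2)
  have E1 : ∑ z, p z * i1 z = I1 := by
    rw [hI1, mi_eq]
    simp_rw [mU, mS, mUS]
    rfl
  have E3 : ∑ z, p z * i3 z = I3 := by
    rw [hI3, mi_eq]
    simp_rw [mU, mX, mUX]
    rfl
  have E2 : ∑ z, p z * i2 z = I1 + I2 := by
    rw [hI1, hI2, mi_eq, cmi_eq, ← Finset.sum_add_distrib]
    refine Finset.sum_congr rfl fun z _ => ?_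
    rw [mU, mS, mUS, mXS, mUXS]
    simp only [i2]
    ring
  have pos1 : ∀ z, 0 < p z → 0 < PB1 z.2.1 := fun z hz => by
    rw [← mU]; exact hz.trans_le (le_pushf hp0 (fun z => z.2.1) z)
  have pos2 : ∀ z, 0 < p z → 0 < PS z.1 := fun z hz => by
    rw [← mS]; exact hz.trans_le (le_pushf hp0 (fun z => z.1) z)
  have pos3 : ∀ z, 0 < p z → 0 < PS z.1 * PU z.1 z.2.1 := fun z hz => by
    rw [← mUS]; exact hz.trans_le (le_pushf hp0 (fun z => (z.2.1, z.1)) z)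
  have pos4 : ∀ z, 0 < p z → 0 < PBC1 z.2.1 z.2.2 := fun z hz => by
    rw [← mUX]; exact hz.trans_le (le_pushf hp0 (fun z => (z.2.1, z.2.2)) z)
  have pos5 : ∀ z, 0 < p z → 0 < PC1 z.2.2 := fun z hz => by
    rw [← mX]; exact hz.trans_le (le_pushf hp0 (fun z => z.2.2) z)
  have pos6 : ∀ z, 0 < p z → 0 < PXgS z.1 z.2.2 * PS z.1 := fun z hz => by
    rw [← mXS]; exact hz.trans_le (le_pushf hp0 (fun z => (z.2.2, z.1)) z)
  -- parameters
  set δ := (I3 - I1 - R) / 4 with hδd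
  have hδ : 0 < δ := by rw [hδd]; linarith
  set β := ε / 16 with hβd
  have hβ : 0 < β := by positivity
  obtain ⟨N1, hN1⟩ := wlln hp0 hp1 i1 hδ hβ
  obtain ⟨N2, hN2⟩ := wlln hp0 hp1 i2 hδ hβ
  obtain ⟨N3, hN3⟩ := wlln hp0 hp1 i3 hδ hβ
  have hr0 : (0 : ℝ) < (2 : ℝ) ^ (-δ) := by positivity
  have hr1 : (2 : ℝ) ^ (-δ) < 1 :=
    Real.rpow_lt_one_of_one_lt_of_neg (by norm_num) (by linarith)
  obtain ⟨N4, hN4⟩ := exists_pow_lt_of_lt_one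
    (show 0 < min (β / 8) (β ^ 2 / 8) by positivity) hr1
  set n := N1 + N2 + N3 + N4 + 1 with hn
  have hy : (2 : ℝ) ^ (-((n : ℝ) * δ)) ≤ min (β / 8) (β ^ 2 / 8) := by
    have e : (2 : ℝ) ^ (-((n : ℝ) * δ)) = ((2 : ℝ) ^ (-δ)) ^ n := by
      rw [← Real.rpow_natCast, ← Real.rpow_mul (by norm_num)]
      congr 1; ring
    rw [e]
    exact (pow_le_pow_of_le_one hr0.le hr1.le (by omega)).trans hN4.le
  have hy1 := hy.trans (min_le_left _ _)
  have hy2 := hy.trans (min_le_right _ _)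
  have hN1' := hN1 n (by omega)
  have hN2' := hN2 n (by omega)
  have hN3' := hN3 n (by omega)
  rw [E1] at hN1'
  rw [E2] at hN2'
  rw [E3] at hN3'
  obtain ⟨M, K, L, hM, hK, hL, hMR, hKR, hp1', hp2', hp3'⟩ := params (β := β) hRnn hmi0 hcmi0 hRK hδ
    (by rw [hδd]; ring : R + I1 + 4 * δ = I3) n (by linarith) (by linarith)
  obtain ⟨f, g, hf0, hf1, hferr, hftv⟩ := oneshot (A := Fin n → S) (B := Fin n → U)
    (C := Fin n → X)
    (fun a => ∏ t, PS (a t)) (fun a b => ∏ t, PU (a t) (b t))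
    (fun b a x => ∏ t, W (b t) (a t) (x t)) (fun a x => ∏ t, (PXgS (a t) (x t) * PS (a t)))
    (fun b => ∏ t, PB1 (b t)) (fun b x => ∏ t, PBC1 (b t) (x t)) (fun x => ∏ t, PC1 (x t))
    (fun a => Finset.prod_nonneg fun t _ => hPS0 _)
    (by rw [sum_pi_prod (fun _ s => PS s)]; simp [hPS1])
    (fun a b => Finset.prod_nonneg fun t _ => hPU0 _ _)
    (fun a => by rw [sum_pi_prod (fun t u => PU (a t) u)]; simp [hPU1])
    (fun b a x => Finset.prod_nonneg fun t _ => hW0 _ _ _)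
    (fun b a => by rw [sum_pi_prod (fun t x => W (b t) (a t) x)]; simp [hW1])
    (fun a x => by
      simp_rw [← Finset.prod_mul_distrib]
      rw [sum_pi_prod (fun t u => PS (a t) * PU (a t) u * W u (a t) (x t))]
      simp_rw [hT1])
    (fun b => by
      simp_rw [← Finset.prod_mul_distrib]
      rw [sum_pi_prod (fun t s => PS s * PU s (b t))])
    (fun b x => by
      simp_rw [← Finset.prod_mul_distrib]
      rw [sum_pi_prod (fun t s => PS s * PU s (b t) * W (b t) s (x t))])
    (fun x => by
      rw [sum_pi_prod (fun t u => PBC1 u (x t))])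
    hβ
    (τ1 := (2 : ℝ) ^ (n * (I1 + δ))) (τ2 := (2 : ℝ) ^ (n * (I1 + I2 + δ)))
    (τ3 := (2 : ℝ) ^ (n * (I3 - δ))) (by positivity) (by positivity) (by positivity)
    M K L hM hK hL
    (bad_le PS PU W (fun z => rfl) hp0 _ _ (fun w hw hb => by
      rw [← Finset.prod_mul_distrib, two_pow_prod_lt _ _ _ (fun t => pos2 _ (hw t))
        (fun t => pos1 _ (hw t)) (fun t => pos3 _ (hw t))] at hb
      change n * (I1 + δ) < ∑ t, i1 (w t) at hb
      refine le_trans ?_ (le_abs_self _)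
      linarith) hN1')
    (bad_le PS PU W (fun z => rfl) hp0 _ _ (fun w hw hb => by
      rw [← Finset.prod_mul_distrib, ← Finset.prod_mul_distrib,
        two_pow_prod_lt _ _ _ (fun t => pos6 _ (hw t))
        (fun t => pos1 _ (hw t)) (fun t => hw t)] at hb
      change n * (I1 + I2 + δ) < ∑ t, i2 (w t) at hb
      refine le_trans ?_ (le_abs_self _)
      linarith) hN2')
    (bad_le PS PU W (fun z => rfl) hp0 _ _ (fun w hw hb => by
      rw [← not_lt, two_pow_prod_lt _ _ _ (fun t => pos5 _ (hw t))
        (fun t => pos1 _ (hw t)) (fun t => pos4 _ (hw t)), not_lt] at hb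
      change ∑ t, i3 (w t) ≤ n * (I3 - δ) at hb
      refine le_trans ?_ (neg_le_abs _)
      linarith) hN3')
    hp1' hp2' hp3'
  have hMr : (0 : ℝ) < M := by exact_mod_cast hM
  have h16 : 16 * β = ε := by rw [hβd]; ring
  rw [h16] at hferr hftv
  refine ⟨n, M, K, by omega, hM, hK, hMR, hKR, f, g, hf0, hf1, ?_, ?_⟩
  · simp_rw [Fintype.sum_prod_type]
    rw [Finset.sum_comm]
    have hm : ∀ m : Fin M, ∑ a : Fin n → S, ∑ k, ∑ b : Fin n → U, ∑ x : Fin n → X,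
        (if g x k ≠ m then (∏ t, PS (a t)) * (1 / (M : ℝ)) * (1 / (K : ℝ)) * f a m k b
          * ∏ t, W (b t) (a t) (x t) else 0) ≤ (1 / (M : ℝ)) * ε := by
      intro m
      rw [Finset.sum_comm]
      refine le_trans (le_of_eq ?_) (mul_le_mul_of_nonneg_left (hferr m) (by positivity))
      simp_rw [Finset.mul_sum]
      refine Finset.sum_congr rfl fun k _ => Finset.sum_congr rfl fun a _ =>
        Finset.sum_congr rfl fun b _ => Finset.sum_congr rfl fun x _ => ?_
      split_ifs <;> ring
    calc _ ≤ ∑ m : Fin M, (1 / (M : ℝ)) * ε := Finset.sum_le_sum fun m _ => hm m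
      _ = ε := by
        simp only [Finset.sum_const, Finset.card_univ, Fintype.card_fin, nsmul_eq_mul]
        field_simp
  · intro m
    refine le_trans (le_of_eq ?_) (hftv m)
    unfold TV
    congr 1
    rw [Fintype.sum_prod_type, Finset.sum_comm]
    refine Finset.sum_congr rfl fun a _ => Finset.sum_congr rfl fun x _ => ?_
    congr 2
    simp_rw [Finset.mul_sum]
    refine Finset.sum_congr rfl fun k _ => Finset.sum_congr rfl fun b _ => ?_
    field_simp
end
end

section
/- Achievability computation in Corollary 2 (binary-support pair model). Fix an integer V ≥ 2 and work in the pair model. Let (A, B) be any partition of {1,…,V} into two nonempty sets, and define U = 1{X ∈ B} (a deterministic binary function of X). Then under the joint distribution of (S, U, X): H(U|X) = 0, H(U|S) = |A|·|B| / C(V,2), and consequently I(U;X) − I(U;S) = |A|·|B| / C(V,2) and I(U;X|S) = |A|·|B| / C(V,2). In particular, choosing |A| = ⌊V/2⌋ and |B| = ⌈V/2⌉ gives I(U;X) − I(U;S) = I(U;X|S) = ⌊V²/4⌋ / C(V,2). -/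
open Finset Filter Real

noncomputable section

open scoped Classical

theorem entRV_comp_inj {α β γ : Type*} [Fintype α] [Fintype β] [Fintype γ]
    (p : α → ℝ) (f : α → β) (φ : β → γ) (hφ : Function.Injective φ) :
    entRV p (fun a => φ (f a)) = entRV p f := by
  unfold entRV ent
  congr 1
  symm
  apply Fintype.sum_of_injective φ hφ
  · intro c hc
    have : pushf p (fun a => φ (f a)) c = 0 := by
      unfold pushf
      apply Finset.sum_eq_zero
      intro a _
      rw [if_neg]
      intro h
      exact hc ⟨f a, h⟩
    rw [this, zero_mul]
  · intro b
    have : pushf p (fun a => φ (f a)) (φ b) = pushf p f b := by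
      unfold pushf
      simp only [hφ.eq_iff]
    rw [this]

theorem count_split {V : ℕ} (A B : Finset (Fin V)) (hdisj : Disjoint A B) :
    ∑ s : {s : Finset (Fin V) // s.card = 2}, (((s.1 ∩ A).card : ℝ) * ((s.1 ∩ B).card : ℝ))
      = (A.card : ℝ) * B.card := by
  have h1 : ∀ s : {s : Finset (Fin V) // s.card = 2},
      (((s.1 ∩ A).card : ℝ) * ((s.1 ∩ B).card : ℝ))
       = ∑ a ∈ A, ∑ b ∈ B, if a ∈ s.1 ∧ b ∈ s.1 then (1 : ℝ) else 0 := by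
    intro s
    have e : ∀ T : Finset (Fin V), ((s.1 ∩ T).card : ℝ) = ∑ a ∈ T, if a ∈ s.1 then (1:ℝ) else 0 := by
      intro T
      rw [Finset.sum_boole, Finset.inter_comm, Finset.filter_mem_eq_inter]
    rw [e, e, Finset.sum_mul_sum]
    refine Finset.sum_congr rfl fun a _ => Finset.sum_congr rfl fun b _ => ?_
    by_cases ha : a ∈ s.1 <;> by_cases hb : b ∈ s.1 <;> simp [ha, hb]
  simp_rw [h1]
  rw [Finset.sum_comm]
  have h2 : ∀ a ∈ A, ∑ s : {s : Finset (Fin V) // s.card = 2}, ∑ b ∈ B,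
      (if a ∈ s.1 ∧ b ∈ s.1 then (1 : ℝ) else 0) = B.card := by
    intro a ha
    rw [Finset.sum_comm, Finset.card_eq_sum_ones, Nat.cast_sum]
    refine Finset.sum_congr rfl fun b hb => ?_
    have hab : a ≠ b := fun h => Finset.disjoint_left.mp hdisj ha (h ▸ hb)
    rw [Finset.sum_eq_single (⟨{a, b}, Finset.card_pair hab⟩ : {s : Finset (Fin V) // s.card = 2})]
    · simp
    · intro s _ hs
      rw [if_neg]
      rintro ⟨h, h'⟩
      apply hs
      apply Subtype.ext
      symm
      apply Finset.eq_of_subset_of_card_le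
      · intro x hx
        simp only [Finset.mem_insert, Finset.mem_singleton] at hx
        rcases hx with rfl | rfl <;> assumption
      · rw [s.2, Finset.card_pair hab]
    · simp
  rw [Finset.sum_congr rfl h2]
  simp

theorem term_aux (C : ℝ) (hC : 0 < C) (k l : ℕ) (hkl : k + l = 2) :
    -((l / (C * 2)) * Real.logb 2 (l / (C * 2)) + (k / (C * 2)) * Real.logb 2 (k / (C * 2)))
      + 1 / C * Real.logb 2 (1 / C) = (k : ℝ) * l / C := by
  have hk : k ≤ 2 := by omega
  interval_cases k
  · obtain rfl : l = 2 := by omega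
    have : ((2:ℕ):ℝ) / (C * 2) = 1 / C := by push_cast; field_simp
    rw [this]; simp
  · obtain rfl : l = 1 := by omega
    have : Real.logb 2 (1 / (C * 2)) = Real.logb 2 (1 / C) - 1 := by
      rw [← div_div, Real.logb_div (by positivity) (by norm_num)]
      simp
    simp only [Nat.cast_one]
    rw [this]
    field_simp
    ring
  · obtain rfl : l = 0 := by omega
    have : ((2:ℕ):ℝ) / (C * 2) = 1 / C := by push_cast; field_simp
    rw [this]; simp

theorem condEnt_US (V : ℕ) (hV : 2 ≤ V)
    (A B : Finset (Fin V)) (hdisj : Disjoint A B) (hcover : A ∪ B = Finset.univ) :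
    condEnt (fun z : {s : Finset (Fin V) // s.card = 2} × Fin V =>
        if z.2 ∈ z.1.val then 1 / ((V.choose 2 : ℝ) * 2) else 0)
      (fun z => decide (z.2 ∈ B)) (fun z => z.1)
      = (A.card * B.card : ℝ) / (V.choose 2 : ℝ) := by
  have hC : (0:ℝ) < (V.choose 2 : ℝ) := by exact_mod_cast Nat.choose_pos hV
  set C : ℝ := (V.choose 2 : ℝ) with hCdef
  have hA : ∀ x, x ∈ A ↔ x ∉ B := by
    intro x
    constructor
    · exact fun h h' => Finset.disjoint_left.mp hdisj h h'
    · intro h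
      have : x ∈ A ∪ B := hcover ▸ Finset.mem_univ x
      rcases Finset.mem_union.mp this with h1 | h1
      · exact h1
      · exact absurd h1 h
  have key : ∀ (s : {s : Finset (Fin V) // s.card = 2}) (T : Finset (Fin V)),
      ((s.1 ∩ T).card : ℝ) / (C * 2) = ∑ x, if x ∈ T then (if x ∈ s.1 then 1 / (C * 2) else 0) else 0 := by
    intro s T
    have : ∀ x, (if x ∈ T then (if x ∈ s.1 then 1 / (C * 2) else 0) else 0)
        = if x ∈ s.1 ∩ T then 1 / (C * 2) else 0 := by
      intro x
      by_cases h1 : x ∈ T <;> by_cases h2 : x ∈ s.1 <;> simp [h1, h2]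
    simp_rw [this]
    rw [Finset.sum_ite_mem, Finset.univ_inter, Finset.sum_const, nsmul_eq_mul]
    ring
  have red : ∀ (s : {s : Finset (Fin V) // s.card = 2})
      (g : {s : Finset (Fin V) // s.card = 2} × Fin V → ℝ),
      (∑ z, if z.1 = s then g z else 0) = ∑ x, g (s, x) := by
    intro s g
    rw [Fintype.sum_prod_type, Finset.sum_eq_single s]
    · simp
    · intro t _ ht
      simp [ht]
    · simp
  unfold condEnt entRV ent
  have hS : ∀ s, pushf (fun z : {s : Finset (Fin V) // s.card = 2} × Fin V =>
        if z.2 ∈ z.1.val then 1 / (C * 2) else 0) (fun z => z.1) s = 1 / C := by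
    intro s
    unfold pushf
    refine Eq.trans ?_ ((red s (fun z => if z.2 ∈ z.1.val then 1 / (C * 2) else 0)).trans ?_)
    · refine Finset.sum_congr rfl fun z _ => ?_
      by_cases h2 : z.1 = s <;> simp [h2]
    have := key s Finset.univ
    simp only [Finset.inter_univ, s.2, Finset.mem_univ, if_true] at this
    rw [← this]
    push_cast
    field_simp
  have hT : ∀ s, pushf (fun z : {s : Finset (Fin V) // s.card = 2} × Fin V =>
        if z.2 ∈ z.1.val then 1 / (C * 2) else 0) (fun z => (decide (z.2 ∈ B), z.1)) (true, s)
        = ((s.1 ∩ B).card : ℝ) / (C * 2) := by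
    intro s
    rw [key s B]
    unfold pushf
    rw [← red s (fun z => if z.2 ∈ B then (if z.2 ∈ z.1.1 then 1 / (C * 2) else 0) else 0)]
    refine Finset.sum_congr rfl fun z _ => ?_
    by_cases h1 : z.2 ∈ B <;> by_cases h2 : z.1 = s <;> simp [h1, h2]
  have hF : ∀ s, pushf (fun z : {s : Finset (Fin V) // s.card = 2} × Fin V =>
        if z.2 ∈ z.1.val then 1 / (C * 2) else 0) (fun z => (decide (z.2 ∈ B), z.1)) (false, s)
        = ((s.1 ∩ A).card : ℝ) / (C * 2) := by
    intro s
    rw [key s A]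
    unfold pushf
    rw [← red s (fun z => if z.2 ∈ A then (if z.2 ∈ z.1.1 then 1 / (C * 2) else 0) else 0)]
    refine Finset.sum_congr rfl fun z _ => ?_
    by_cases h1 : z.2 ∈ B <;> by_cases h2 : z.1 = s <;> simp [h1, h2, hA]
  rw [Fintype.sum_prod_type, Fintype.sum_bool]
  simp_rw [hS, hT, hF]
  rw [← count_split A B hdisj, Finset.sum_div, ← Finset.sum_add_distrib, sub_neg_eq_add,
    ← Finset.sum_neg_distrib, ← Finset.sum_add_distrib]
  refine Finset.sum_congr rfl fun s _ => ?_
  apply term_aux C hC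
  rw [← Finset.card_union_of_disjoint, ← Finset.inter_union_distrib_left, hcover,
    Finset.inter_univ, s.2]
  exact hdisj.mono Finset.inter_subset_right Finset.inter_subset_right

/-- **Achievability computation in Corollary 2** (binary-support pair model).
In the pair model on `{1,…,V}` (state `S` uniform on 2-element subsets, token `X`
uniform on the pair given `S`), for any partition `(A, B)` of the vocabulary into two
nonempty sets and the deterministic binary auxiliary `U = 1{X ∈ B}`:
`H(U|X) = 0`, `H(U|S) = |A||B|/C(V,2)`, `I(U;X) − I(U;S) = |A||B|/C(V,2)` and
`I(U;X|S) = |A||B|/C(V,2)`.  In particular, for `|A| = ⌊V/2⌋` (hence `|B| = ⌈V/2⌉`)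
these quantities equal `⌊V²/4⌋ / C(V,2)`. -/
theorem corollary2_achievability (V : ℕ) (hV : 2 ≤ V)
    (A B : Finset (Fin V)) (hdisj : Disjoint A B) (hcover : A ∪ B = Finset.univ)
    (hA : A.Nonempty) (hB : B.Nonempty) :
    -- joint pmf of (S, X) in the pair model
    let p : {s : Finset (Fin V) // s.card = 2} × Fin V → ℝ :=
      fun z => if z.2 ∈ z.1.val then 1 / ((V.choose 2 : ℝ) * 2) else 0
    let Urv : {s : Finset (Fin V) // s.card = 2} × Fin V → Bool :=
      fun z => decide (z.2 ∈ B)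
    let Xrv : {s : Finset (Fin V) // s.card = 2} × Fin V → Fin V := fun z => z.2
    let Srv : {s : Finset (Fin V) // s.card = 2} × Fin V → {s : Finset (Fin V) // s.card = 2} :=
      fun z => z.1
    condEnt p Urv Xrv = 0 ∧
    condEnt p Urv Srv = (A.card * B.card : ℝ) / (V.choose 2 : ℝ) ∧
    mi p Urv Xrv - mi p Urv Srv = (A.card * B.card : ℝ) / (V.choose 2 : ℝ) ∧
    cmi p Urv Xrv Srv = (A.card * B.card : ℝ) / (V.choose 2 : ℝ) ∧
    (A.card = V / 2 →
      mi p Urv Xrv - mi p Urv Srv = ((V ^ 2 / 4 : ℕ) : ℝ) / (V.choose 2 : ℝ) ∧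
      cmi p Urv Xrv Srv = ((V ^ 2 / 4 : ℕ) : ℝ) / (V.choose 2 : ℝ)) := by
  intro p Urv Xrv Srv
  have e1 : entRV p (fun a => (Urv a, Xrv a)) = entRV p Xrv :=
    entRV_comp_inj p Xrv (fun x => (decide (x ∈ B), x)) (fun x y h => (Prod.ext_iff.mp h).2)
  have e2 : entRV p (fun a => (Urv a, Xrv a, Srv a)) = entRV p (fun a => (Xrv a, Srv a)) :=
    entRV_comp_inj p (fun a => (Xrv a, Srv a)) (fun y => (decide (y.1 ∈ B), y))
      (fun x y h => (Prod.ext_iff.mp h).2)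
  have e3 : condEnt p Urv Srv = (A.card * B.card : ℝ) / (V.choose 2 : ℝ) :=
    condEnt_US V hV A B hdisj hcover
  have e3' := e3
  unfold condEnt at e3'
  have m : mi p Urv Xrv - mi p Urv Srv = (A.card * B.card : ℝ) / (V.choose 2 : ℝ) := by
    unfold mi
    linarith
  have c : cmi p Urv Xrv Srv = (A.card * B.card : ℝ) / (V.choose 2 : ℝ) := by
    unfold cmi
    linarith
  refine ⟨by unfold condEnt; linarith, e3, m, c, ?_⟩
  intro hcard
  have hsum : A.card + B.card = V := by
    rw [← Finset.card_union_of_disjoint hdisj, hcover, Finset.card_univ, Fintype.card_fin]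
  have hprod : A.card * B.card = V ^ 2 / 4 := by
    have hb : B.card = V - V / 2 := by omega
    rw [hcard, hb]
    obtain ⟨k, rfl | rfl⟩ := Nat.even_or_odd' V
    · have h1 : 2 * k / 2 = k := by omega
      have h2 : 2 * k - k = k := by omega
      rw [h1, h2]
      have : (2 * k) ^ 2 = 4 * (k * k) := by ring
      omega
    · have h1 : (2 * k + 1) / 2 = k := by omega
      have h2 : 2 * k + 1 - k = k + 1 := by omega
      rw [h1, h2]
      have : (2 * k + 1) ^ 2 = 4 * (k * (k + 1)) + 1 := by ring
      omega
  rw [m, c, ← hprod]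
  push_cast
  exact ⟨rfl, rfl⟩
end
end

section
/- Converse identity in the proof of Corollary 2. Fix an integer V ≥ 2 and work in the pair model. Let U be a {0,1}-valued random variable generated from X by an arbitrary stochastic map, i.e., U is conditionally independent of S given X, with q_i = P(U = 1 | X = i) for i = 1,…,V. Then H(U|S) − H(U|X) = (1 / C(V,2)) · Σ_{1 ≤ i < j ≤ V} [ h₂((q_i + q_j)/2) − (h₂(q_i) + h₂(q_j))/2 ]. -/
open Finset Filter Real

noncomputable section

open scoped Classical

lemma aux_h2 (c r : ℝ) :
    -(c * r * Real.logb 2 (c * r)) - c * (1 - r) * Real.logb 2 (c * (1 - r))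
      + c * Real.logb 2 c = c * h2 r := by
  unfold h2
  by_cases hc : c = 0
  · simp [hc]
  by_cases hr : r = 0
  · simp [hr]
  by_cases hr1 : 1 - r = 0
  · have : r = 1 := by linarith
    simp [this]
  rw [Real.logb_mul hc hr, Real.logb_mul hc hr1]
  ring

lemma aux_condEnt {α γ : Type*} [Fintype α] [Fintype γ] (p : α → ℝ) (f : α → Bool) (g : α → γ)
    (w r : γ → ℝ)
    (h : ∀ u c, pushf p (fun a => (f a, g a)) (u, c) = w c * (if u then r c else 1 - r c)) :
    condEnt p f g = ∑ c, w c * h2 (r c) := by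
  have hg : ∀ c, pushf p g c = w c := by
    intro c
    have e : pushf p g c = pushf p (fun a => (f a, g a)) (true, c)
        + pushf p (fun a => (f a, g a)) (false, c) := by
      unfold pushf
      rw [← Finset.sum_add_distrib]
      refine Finset.sum_congr rfl fun a _ => ?_
      cases hf : f a <;> simp [hf]
    rw [e, h, h]
    simp
    ring
  unfold condEnt entRV ent
  rw [Fintype.sum_prod_type]
  simp only [h, hg, Fintype.sum_bool, if_true, Bool.false_eq_true, if_false]
  simp only [← aux_h2, Finset.sum_add_distrib, Finset.sum_sub_distrib, Finset.sum_neg_distrib]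
  ring

lemma aux_pairs (V : ℕ) (F : Finset (Fin V) → ℝ) :
    ∑ s : {s : Finset (Fin V) // s.card = 2}, F s.val
      = ∑ i : Fin V, ∑ j : Fin V, if i < j then F {i, j} else 0 := by
  rw [← Fintype.sum_prod_type' (f := fun i j : Fin V => if i < j then F {i, j} else 0),
    ← Finset.sum_filter]
  symm
  refine Finset.sum_bij (fun a ha => ⟨{a.1, a.2},
    Finset.card_pair (by simpa using (Finset.mem_filter.1 ha).2.ne)⟩) ?_ ?_ ?_ ?_
  · intros; simp
  · rintro ⟨a, b⟩ ha ⟨c, d⟩ hc h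
    simp only [Finset.mem_filter, Finset.mem_univ, true_and] at ha hc
    have h := congrArg Subtype.val h
    simp only at h
    have h1 : a ∈ ({c, d} : Finset (Fin V)) := h ▸ (by simp)
    have h2 : b ∈ ({c, d} : Finset (Fin V)) := h ▸ (by simp)
    simp only [Finset.mem_insert, Finset.mem_singleton] at h1 h2
    simp only [Prod.mk.injEq]
    have h3 : c ∈ ({a, b} : Finset (Fin V)) := h ▸ (by simp)
    simp only [Finset.mem_insert, Finset.mem_singleton] at h3
    omega
  · rintro ⟨s, hs⟩ _
    obtain ⟨x, y, hxy, rfl⟩ := Finset.card_eq_two.1 hs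
    rcases lt_or_gt_of_ne hxy with h | h
    · exact ⟨(x, y), by simpa using h, rfl⟩
    · exact ⟨(y, x), by simpa using h, Subtype.ext (Finset.pair_comm _ _)⟩
  · intros; rfl

/-- **Converse identity in the proof of Corollary 2.**  In the pair model on `{1,…,V}`,
let `U ∈ {0,1}` be generated from `X` by an arbitrary stochastic map (so `U` is
conditionally independent of `S` given `X`) with `qᵢ = P(U = 1 | X = i)`.  Then
`H(U|S) − H(U|X) = (1/C(V,2)) Σ_{i<j} [h₂((qᵢ+qⱼ)/2) − (h₂(qᵢ)+h₂(qⱼ))/2]`. -/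
theorem corollary2_converse_identity (V : ℕ) (hV : 2 ≤ V)
    (q : Fin V → ℝ) (hq0 : ∀ i, 0 ≤ q i) (hq1 : ∀ i, q i ≤ 1) :
    -- joint pmf of (S, X, U): the pair model for (S, X), and U drawn from X via q
    let p : {s : Finset (Fin V) // s.card = 2} × Fin V × Bool → ℝ :=
      fun z => (if z.2.1 ∈ z.1.val then 1 / ((V.choose 2 : ℝ) * 2) else 0) *
        (if z.2.2 then q z.2.1 else 1 - q z.2.1)
    let Urv : {s : Finset (Fin V) // s.card = 2} × Fin V × Bool → Bool := fun z => z.2.2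
    let Xrv : {s : Finset (Fin V) // s.card = 2} × Fin V × Bool → Fin V := fun z => z.2.1
    let Srv : {s : Finset (Fin V) // s.card = 2} × Fin V × Bool →
        {s : Finset (Fin V) // s.card = 2} := fun z => z.1
    condEnt p Urv Srv - condEnt p Urv Xrv =
      (1 / (V.choose 2 : ℝ)) * ∑ i : Fin V, ∑ j : Fin V,
        if i < j then h2 ((q i + q j) / 2) - (h2 (q i) + h2 (q j)) / 2 else 0 := by
  intro p Urv Xrv Srv
  have hS : condEnt p Urv Srv = ∑ s : {s : Finset (Fin V) // s.card = 2},
      (1 / (V.choose 2 : ℝ)) * h2 ((∑ x ∈ s.val, q x) / 2) := by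
    apply aux_condEnt
    rintro u ⟨s, hs⟩
    have e : pushf p (fun a => (Urv a, Srv a)) (u, ⟨s, hs⟩)
        = ∑ x ∈ s, 1 / ((V.choose 2 : ℝ) * 2) * (if u then q x else 1 - q x) := by
      simp only [pushf, p, Urv, Srv, Fintype.sum_prod_type, Prod.mk.injEq]
      rw [Finset.sum_eq_single (⟨s, hs⟩ : {s : Finset (Fin V) // s.card = 2})
        (by intro b _ hb; simp [hb]) (by simp)]
      rw [← Finset.sum_filter_add_sum_filter_not Finset.univ (fun x => x ∈ s)]
      rw [Finset.filter_mem_eq_inter, Finset.univ_inter]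
      rw [Finset.sum_eq_zero (s := Finset.univ.filter (fun x => ¬ x ∈ s))
        (by intro x hx; simp [(Finset.mem_filter.1 hx).2]), add_zero]
      refine Finset.sum_congr rfl fun x hx => ?_
      cases u <;> simp [hx]
    rw [e]
    obtain ⟨x, y, hxy, rfl⟩ := Finset.card_eq_two.1 hs
    simp only [Finset.sum_pair hxy]
    cases u <;> simp <;> ring
  have hX : condEnt p Urv Xrv = ∑ x : Fin V,
      (∑ s : {s : Finset (Fin V) // s.card = 2},
        if x ∈ s.val then 1 / ((V.choose 2 : ℝ) * 2) else 0) * h2 (q x) := by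
    apply aux_condEnt
    intro u x
    simp only [pushf, p, Urv, Xrv, Fintype.sum_prod_type, Prod.mk.injEq]
    rw [Finset.sum_mul]
    refine Finset.sum_congr rfl fun s _ => ?_
    rw [Finset.sum_eq_single x (by intro b _ hb; simp [hb]) (by simp)]
    cases u <;> simp
  have hX2 : condEnt p Urv Xrv = ∑ s : {s : Finset (Fin V) // s.card = 2},
      (1 / (V.choose 2 : ℝ)) * ((∑ x ∈ s.val, h2 (q x)) / 2) := by
    rw [hX]
    simp only [Finset.sum_mul]
    rw [Finset.sum_comm]
    refine Finset.sum_congr rfl fun s _ => ?_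
    simp only [ite_mul, zero_mul]
    rw [← Finset.sum_filter, Finset.filter_mem_eq_inter, Finset.univ_inter, ← Finset.mul_sum]
    simp only [one_div, mul_inv]
    ring
  rw [hS, hX2, ← Finset.sum_sub_distrib]
  simp only [← mul_sub]
  rw [← Finset.mul_sum, aux_pairs V (fun s => h2 ((∑ x ∈ s, q x) / 2) - (∑ x ∈ s, h2 (q x)) / 2)]
  congr 1
  refine Finset.sum_congr rfl fun i _ => Finset.sum_congr rfl fun j _ => ?_
  split_ifs with h
  · simp only [Finset.sum_pair h.ne]
  · rfl
end
end

section
/- Jensen–Shannon sum bound (converse of Corollary 2). For every integer V ≥ 2 and every vector q = (q_1,…,q_V) ∈ [0,1]^V, Σ_{1 ≤ i < j ≤ V} [ h₂((q_i + q_j)/2) − (h₂(q_i) + h₂(q_j))/2 ] ≤ ⌊V²/4⌋, with equality attained when q_i = 0 for ⌊V/2⌋ indices and q_i = 1 for the remaining ⌈V/2⌉ indices. Equivalently, for any binary U obtained from X by a stochastic map in the pair model, H(U|S) − H(U|X) ≤ ⌊V²/4⌋ / C(V,2). -/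
open Finset Filter Real

noncomputable section

open scoped Classical

lemma h2_eq_binEntropy (t : ℝ) : h2 t = binEntropy t / Real.log 2 := by
  unfold h2 Real.logb
  rw [binEntropy_eq_negMulLog_add_negMulLog_one_sub]
  unfold negMulLog
  ring

lemma h2_zero : h2 0 = 0 := by simp [h2]
lemma h2_one : h2 1 = 0 := by simp [h2]
lemma h2_half : h2 (1 / 2) = 1 := by
  have h : (0 : ℝ) < Real.log 2 := Real.log_pos (by norm_num)
  rw [h2_eq_binEntropy, one_div, binEntropy_two_inv, div_self h.ne']

lemma binEntropy_lower (t : ℝ) (h0 : 0 ≤ t) (h1 : t ≤ 1 / 2) :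
    2 * t * Real.log 2 ≤ binEntropy t := by
  have hc := Real.strictConcave_binEntropy.concaveOn
  have m0 : (0 : ℝ) ∈ Set.Icc (0 : ℝ) 1 := by constructor <;> norm_num
  have m1 : (2⁻¹ : ℝ) ∈ Set.Icc (0 : ℝ) 1 := by constructor <;> norm_num
  have n0 : 0 ≤ 1 - 2 * t := by linarith
  have n1 : 0 ≤ 2 * t := by linarith
  have := hc.2 m0 m1 n0 n1 (by ring)
  simp only [smul_eq_mul, binEntropy_zero, binEntropy_two_inv] at this
  have e : (1 - 2 * t) * 0 + 2 * t * 2⁻¹ = t := by ring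
  rw [e] at this
  linarith

lemma h2_lower (t : ℝ) (h0 : 0 ≤ t) (h1 : t ≤ 1) : 1 - |1 - 2 * t| ≤ h2 t := by
  have h : (0 : ℝ) < Real.log 2 := Real.log_pos (by norm_num)
  rw [h2_eq_binEntropy, le_div_iff₀ h]
  rcases le_total t (1 / 2) with ht | ht
  · rw [abs_of_nonneg (by linarith)]
    have := binEntropy_lower t h0 ht
    linarith
  · rw [abs_of_nonpos (by linarith)]
    have := binEntropy_lower (1 - t) (by linarith) (by linarith)
    rw [binEntropy_one_sub] at this
    linarith

/-- one coordinate of the Jensen–Shannon divergence is at most half the `L¹` distance -/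
lemma term_bound (a b : ℝ) (ha : 0 ≤ a) (hb : 0 ≤ b) :
    -((a + b) / 2 * Real.logb 2 ((a + b) / 2))
      + (a * Real.logb 2 a + b * Real.logb 2 b) / 2 ≤ |a - b| / 2 := by
  rcases ha.eq_or_lt with rfl | ha'
  · rcases hb.eq_or_lt with rfl | hb'
    · simp
    · rw [Real.logb_div (by linarith) (by norm_num), Real.logb_self_eq_one (by norm_num)]
      simp only [zero_add, zero_sub, abs_neg, abs_of_pos hb']
      apply le_of_eq; ring
  rcases hb.eq_or_lt with rfl | hb'
  · rw [Real.logb_div (by linarith) (by norm_num), Real.logb_self_eq_one (by norm_num)]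
    simp only [add_zero, sub_zero, abs_of_pos ha']
    apply le_of_eq; ring
  have hs : 0 < a + b := by linarith
  have key := h2_lower (a / (a + b)) (by positivity) (by rw [div_le_one hs]; linarith)
  have e1 : 1 - a / (a + b) = b / (a + b) := by field_simp; ring
  have e2 : 1 - 2 * (a / (a + b)) = (b - a) / (a + b) := by field_simp; ring
  unfold h2 at key
  rw [e1, e2, abs_div, abs_of_pos hs, Real.logb_div ha'.ne' hs.ne',
    Real.logb_div hb'.ne' hs.ne', abs_sub_comm] at key
  rw [Real.logb_div hs.ne' (by norm_num), Real.logb_self_eq_one (by norm_num)]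
  have k2 := mul_le_mul_of_nonneg_left key hs.le
  have e3 : (a + b) * (1 - |a - b| / (a + b)) = a + b - |a - b| := by field_simp
  have e4 : (a + b) * (-(a / (a + b) * (Real.logb 2 a - Real.logb 2 (a + b)))
      - b / (a + b) * (Real.logb 2 b - Real.logb 2 (a + b)))
      = -(a * (Real.logb 2 a - Real.logb 2 (a + b)))
        - b * (Real.logb 2 b - Real.logb 2 (a + b)) := by field_simp
  rw [e3, e4] at k2
  linarith

lemma js_le (a b : ℝ) (ha : 0 ≤ a) (ha1 : a ≤ 1) (hb : 0 ≤ b) (hb1 : b ≤ 1) :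
    h2 ((a + b) / 2) - (h2 a + h2 b) / 2 ≤ |a - b| := by
  have k1 := term_bound a b ha hb
  have k2 := term_bound (1 - a) (1 - b) (by linarith) (by linarith)
  have e1 : (1 - a + (1 - b)) / 2 = 1 - (a + b) / 2 := by ring
  have e2 : 1 - a - (1 - b) = b - a := by ring
  rw [e1, e2, abs_sub_comm] at k2
  unfold h2
  linarith

lemma abs_sum_bound {ι : Type*} (q : ι → ℝ) (hq0 : ∀ i, 0 ≤ q i) (hq1 : ∀ i, q i ≤ 1) :
    ∀ (n : ℕ) (S : Finset ι), S.card = n →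
      ∑ i ∈ S, ∑ j ∈ S, |q i - q j| ≤ 2 * ((n ^ 2 / 4 : ℕ) : ℝ) := by
  intro n
  induction n using Nat.strong_induction_on with
  | _ n ih =>
    intro S hS
    rcases Nat.lt_or_ge n 2 with hn | hn
    · have h1 : S.card ≤ 1 := by omega
      rw [Finset.card_le_one] at h1
      have : ∑ i ∈ S, ∑ j ∈ S, |q i - q j| = 0 := by
        refine Finset.sum_eq_zero fun i hi => Finset.sum_eq_zero fun j hj => ?_
        rw [h1 i hi j hj]; simp
      rw [this]; positivity
    · obtain ⟨m, hm, hmin⟩ := S.exists_min_image q (Finset.card_pos.1 (by omega))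
      have hc1 : (S.erase m).card = n - 1 := by rw [Finset.card_erase_of_mem hm, hS]
      obtain ⟨M, hM, hmax⟩ := (S.erase m).exists_max_image q (Finset.card_pos.1 (by omega))
      set T := (S.erase m).erase M with hT
      have hc2 : T.card = n - 2 := by rw [Finset.card_erase_of_mem hM, hc1]; omega
      have split : ∀ f : ι → ℝ, ∑ i ∈ S, f i = f m + (f M + ∑ i ∈ T, f i) := by
        intro f
        rw [← Finset.add_sum_erase S f hm, ← Finset.add_sum_erase _ f hM]
      have hI := ih (n - 2) (by omega) T hc2
      have hmM : q m ≤ q M := hmin M (Finset.mem_of_mem_erase hM)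
      have hk : ∑ k ∈ T, (|q m - q k| + |q M - q k|) ≤ ((n - 2 : ℕ) : ℝ) := by
        calc ∑ k ∈ T, (|q m - q k| + |q M - q k|) ≤ ∑ k ∈ T, (1 : ℝ) := by
              refine Finset.sum_le_sum fun k hk => ?_
              have hk1 := Finset.mem_of_mem_erase hk
              have a1 := hmax k hk1
              have a2 := hmin k (Finset.mem_of_mem_erase hk1)
              rw [abs_of_nonpos (by linarith), abs_of_nonneg (by linarith)]
              linarith [hq0 m, hq1 M]
          _ = _ := by simp [hc2]
      have e : n ^ 2 / 4 = (n - 2) ^ 2 / 4 + (n - 2) + 1 := by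
        obtain ⟨k, rfl⟩ := Nat.exists_eq_add_of_le hn
        have : (2 + k) ^ 2 = k ^ 2 + 4 * (k + 1) := by ring
        rw [this, Nat.add_mul_div_left _ _ (by norm_num)]
        simp; omega
      rw [e]
      push_cast
      rw [split]
      simp only [split]
      simp only [Finset.sum_add_distrib] at hk ⊢
      have s1 : ∑ k ∈ T, |q k - q m| = ∑ k ∈ T, |q m - q k| :=
        Finset.sum_congr rfl fun k _ => abs_sub_comm _ _
      have s2 : ∑ k ∈ T, |q k - q M| = ∑ k ∈ T, |q M - q k| :=
        Finset.sum_congr rfl fun k _ => abs_sub_comm _ _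
      rw [s1, s2, abs_sub_comm (q M) (q m), abs_of_nonpos (by linarith : q m - q M ≤ 0)]
      simp only [sub_self, abs_zero]
      linarith [hq0 m, hq1 M]

lemma sum_lt_symm {V : ℕ} (f : Fin V → Fin V → ℝ) (hs : ∀ i j, f i j = f j i) :
    2 * (∑ i, ∑ j, if i < j then f i j else 0) + ∑ i, f i i = ∑ i, ∑ j, f i j := by
  have h1 : (∑ i, ∑ j, if i < j then f i j else 0) = ∑ i, ∑ j, if j < i then f i j else 0 := by
    rw [Finset.sum_comm]
    refine Finset.sum_congr rfl fun i _ => Finset.sum_congr rfl fun j _ => ?_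
    rw [hs j i]
  have h2 : ∑ i, f i i = ∑ i, ∑ j, if i = j then f i j else 0 := by
    refine Finset.sum_congr rfl fun i _ => ?_
    simp
  rw [two_mul]
  nth_rewrite 2 [h1]
  rw [h2, ← Finset.sum_add_distrib, ← Finset.sum_add_distrib]
  refine Finset.sum_congr rfl fun i _ => ?_
  rw [← Finset.sum_add_distrib, ← Finset.sum_add_distrib]
  refine Finset.sum_congr rfl fun j _ => ?_
  rcases lt_trichotomy i j with h | h | h
  · simp [h, h.not_gt, h.ne]
  · simp [h]
  · simp [h, h.not_gt, h.ne']

lemma part1 (V : ℕ) (q : Fin V → ℝ) (hq0 : ∀ i, 0 ≤ q i) (hq1 : ∀ i, q i ≤ 1) :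
    (∑ i : Fin V, ∑ j : Fin V,
        if i < j then h2 ((q i + q j) / 2) - (h2 (q i) + h2 (q j)) / 2 else 0)
      ≤ ((V ^ 2 / 4 : ℕ) : ℝ) := by
  have h1 := abs_sum_bound q hq0 hq1 V Finset.univ (by simp)
  have h2 := sum_lt_symm (fun i j => |q i - q j|) (fun i j => abs_sub_comm _ _)
  simp only [sub_self, abs_zero, Finset.sum_const_zero, add_zero] at h2
  refine le_trans (Finset.sum_le_sum fun i _ => Finset.sum_le_sum fun j _ => ?_)
    (by linarith : (∑ i, ∑ j, if i < j then |q i - q j| else 0) ≤ _)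
  split_ifs
  · exact js_le _ _ (hq0 i) (hq1 i) (hq0 j) (hq1 j)
  · exact le_rfl

lemma part2 (V : ℕ) (A : Finset (Fin V)) (hA : A.card = V / 2) :
      (∑ i : Fin V, ∑ j : Fin V,
          if i < j then
            h2 (((if i ∈ A then (0 : ℝ) else 1) + (if j ∈ A then (0 : ℝ) else 1)) / 2)
              - (h2 (if i ∈ A then (0 : ℝ) else 1) + h2 (if j ∈ A then (0 : ℝ) else 1)) / 2
          else 0)
        = ((V ^ 2 / 4 : ℕ) : ℝ) := by
  set c : Fin V → ℝ := fun i => if i ∈ A then (1 : ℝ) else 0 with hc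
  have hterm : ∀ i j,
      h2 (((if i ∈ A then (0 : ℝ) else 1) + (if j ∈ A then (0 : ℝ) else 1)) / 2)
        - (h2 (if i ∈ A then (0 : ℝ) else 1) + h2 (if j ∈ A then (0 : ℝ) else 1)) / 2
      = c i * (1 - c j) + c j * (1 - c i) := by
    intro i j
    by_cases hi : i ∈ A <;> by_cases hj : j ∈ A <;>
      simp only [hi, hj, hc, if_true, if_false, h2_zero, h2_one] <;> norm_num [h2_zero, h2_one, h2_half]
  simp only [hterm]
  have h := sum_lt_symm (fun i j => c i * (1 - c j) + c j * (1 - c i)) (fun i j => by ring)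
  have hd : ∑ i, (c i * (1 - c i) + c i * (1 - c i)) = 0 := by
    refine Finset.sum_eq_zero fun i _ => ?_
    by_cases hi : i ∈ A <;> simp [hc, hi]
  have hs : ∑ i, c i = ((V / 2 : ℕ) : ℝ) := by
    rw [← hA]; simp [hc]
  have htot : ∑ i, ∑ j, (c i * (1 - c j) + c j * (1 - c i))
      = 2 * (((V / 2 : ℕ) : ℝ) * (V - ((V / 2 : ℕ) : ℝ))) := by
    simp only [Finset.sum_add_distrib, ← Finset.mul_sum, ← Finset.sum_mul, Finset.sum_sub_distrib, hs]
    simp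
    ring
  have e : ((V ^ 2 / 4 : ℕ) : ℝ) = ((V / 2 : ℕ) : ℝ) * (V - ((V / 2 : ℕ) : ℝ)) := by
    have hle : V / 2 ≤ V := Nat.div_le_self _ _
    rw [← Nat.cast_sub hle, ← Nat.cast_mul]
    congr 1
    rcases Nat.even_or_odd' V with ⟨k, rfl | rfl⟩
    · have a1 : 2 * k / 2 = k := by omega
      have a2 : 2 * k - k = k := by omega
      rw [a1, a2]
      have : (2 * k) ^ 2 = 4 * (k * k) := by ring
      rw [this]; omega
    · have a1 : (2 * k + 1) / 2 = k := by omega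
      have a2 : 2 * k + 1 - k = k + 1 := by omega
      rw [a1, a2]
      have : (2 * k + 1) ^ 2 = 4 * (k * (k + 1)) + 1 := by ring
      rw [this]; omega
  rw [e]
  linarith

lemma sum_pairs {V : ℕ} (G : Finset (Fin V) → ℝ) :
    ∑ s : {s : Finset (Fin V) // s.card = 2}, G s.val
      = ∑ i, ∑ j, if i < j then G {i, j} else 0 := by
  rw [← Finset.sum_product', ← Finset.sum_filter]
  symm
  refine Finset.sum_bij (fun (x : Fin V × Fin V) hx =>
    (⟨{x.1, x.2}, Finset.card_pair (Finset.mem_filter.1 hx).2.ne⟩ :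
      {s : Finset (Fin V) // s.card = 2})) ?_ ?_ ?_ ?_
  · intros; simp
  · rintro ⟨a, b⟩ h1 ⟨c, d⟩ h2 h
    have h1 := (Finset.mem_filter.1 h1).2
    have h2 := (Finset.mem_filter.1 h2).2
    simp only [Subtype.mk.injEq] at h
    have m1 : a ∈ ({c, d} : Finset (Fin V)) := by rw [← h]; simp
    have m2 : b ∈ ({c, d} : Finset (Fin V)) := by rw [← h]; simp
    simp only [Finset.mem_insert, Finset.mem_singleton] at m1 m2
    simp only at h1 h2
    ext <;> grind
  · rintro ⟨s, hs⟩ _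
    obtain ⟨x, y, hxy, rfl⟩ := Finset.card_eq_two.1 hs
    rcases lt_or_gt_of_ne hxy with h | h
    · exact ⟨(x, y), by simp [h], rfl⟩
    · exact ⟨(y, x), by simp [h], by simp [Finset.pair_comm]⟩
  · intros; rfl

lemma sum_pairs_sum {V : ℕ} (f : Fin V → ℝ) :
    ∑ s : {s : Finset (Fin V) // s.card = 2}, ∑ x ∈ s.val, f x
      = ((V : ℝ) - 1) * ∑ x, f x := by
  rw [sum_pairs (fun s => ∑ x ∈ s, f x)]
  have h := sum_lt_symm (fun i j => f i + f j) (fun i j => add_comm _ _)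
  have e : (∑ i, ∑ j, if i < j then ∑ x ∈ ({i, j} : Finset (Fin V)), f x else 0)
      = ∑ i, ∑ j, if i < j then f i + f j else 0 := by
    refine Finset.sum_congr rfl fun i _ => Finset.sum_congr rfl fun j _ => ?_
    split_ifs with hij
    · rw [Finset.sum_pair hij.ne]
    · rfl
  rw [e]
  simp only [Finset.sum_add_distrib, Finset.sum_const, Finset.card_univ, Fintype.card_fin,
    nsmul_eq_mul, ← Finset.mul_sum] at h
  linarith

lemma ent_diff {β : Type*} [Fintype β] (w : ℝ) (hw : w ≠ 0) (r : β → ℝ) :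
    ent (fun z : Bool × β => w * (if z.1 then r z.2 else 1 - r z.2)) - ent (fun _ : β => w)
      = w * ∑ y, h2 (r y) := by
  have hl : ∀ x : ℝ, w * x * Real.logb 2 (w * x)
      = w * x * Real.logb 2 w + w * (x * Real.logb 2 x) := by
    intro x
    by_cases hx : x = 0
    · simp [hx]
    · rw [Real.logb_mul hw hx]; ring
  unfold ent
  rw [Fintype.sum_prod_type]
  simp only [Fintype.sum_bool, if_true, Bool.false_eq_true, if_false, hl]
  rw [← Finset.sum_add_distrib, Finset.mul_sum, sub_neg_eq_add, ← Finset.sum_neg_distrib,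
    ← Finset.sum_add_distrib]
  refine Finset.sum_congr rfl fun y _ => ?_
  unfold h2
  ring

lemma part3 (V : ℕ) (hV : 2 ≤ V)
    (q : Fin V → ℝ) (hq0 : ∀ i, 0 ≤ q i) (hq1 : ∀ i, q i ≤ 1) 
    (p : {s : Finset (Fin V) // s.card = 2} × Fin V × Bool → ℝ)
    (hp : ∀ s x b, p (s, x, b) = (if x ∈ s.val then 1 / ((V.choose 2 : ℝ) * 2) else 0) *
        (if b then q x else 1 - q x)) :
    condEnt p (fun z => z.2.2) (fun z => z.1) - condEnt p (fun z => z.2.2) (fun z => z.2.1)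
      ≤ ((V ^ 2 / 4 : ℕ) : ℝ) / (V.choose 2 : ℝ) := by
  have hVR : (2 : ℝ) ≤ V := by exact_mod_cast hV
  have hC : (V.choose 2 : ℝ) = V * (V - 1) / 2 := Nat.cast_choose_two ℝ V
  have hCpos : 0 < (V.choose 2 : ℝ) := by
    rw [hC]; have : 0 < (V : ℝ) - 1 := by linarith
    positivity
  set C : ℝ := (V.choose 2 : ℝ) with hCdef
  have hcount : ∀ (x : Fin V) (c : ℝ), (∑ s : {s : Finset (Fin V) // s.card = 2},
      if x ∈ s.val then c else 0) = (V - 1) * c := by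
    intro x c
    have := sum_pairs_sum (fun y => if y = x then c else 0)
    simpa using this
  have pS : pushf p (fun z => z.1) = fun _ => 1 / C := by
    funext s
    simp only [pushf, Fintype.sum_prod_type, Fintype.sum_bool, hp]
    rw [Finset.sum_eq_single s (by intro b _ hb; simp [hb]) (by simp)]
    have hs : (s.val.card : ℝ) = 2 := by rw [s.2]; norm_num
    simp only [if_true, Bool.false_eq_true, if_false, ← mul_add, add_sub_cancel, mul_one]
    rw [Finset.sum_ite_mem, Finset.univ_inter, Finset.sum_const, nsmul_eq_mul, hs]
    field_simp
  have pX : pushf p (fun z => z.2.1) = fun _ => 1 / (V : ℝ) := by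
    funext x
    simp only [pushf, Fintype.sum_prod_type, Fintype.sum_bool, hp]
    refine Eq.trans (Finset.sum_congr rfl fun s _ => ?_) ((hcount x (1 / (C * 2))).trans ?_)
    · rw [Finset.sum_eq_single x (by intro b _ hb; simp [hb]) (by simp)]
      simp only [if_true, Bool.false_eq_true, if_false, ← mul_add, add_sub_cancel, mul_one]
    rw [hC]
    have : (V : ℝ) - 1 ≠ 0 := by linarith
    field_simp
  have pUS : pushf p (fun z => (z.2.2, z.1)) = fun z : Bool × {s : Finset (Fin V) // s.card = 2} =>
      1 / C * (if z.1 then (∑ x ∈ z.2.val, q x) / 2 else 1 - (∑ x ∈ z.2.val, q x) / 2) := by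
    funext ⟨b, s⟩
    simp only [pushf, Fintype.sum_prod_type, Fintype.sum_bool, hp, Prod.mk.injEq]
    rw [Finset.sum_eq_single s (by intro b _ hb; simp [hb]) (by simp)]
    have hs : (s.val.card : ℝ) = 2 := by rw [s.2]; norm_num
    cases b
    · simp only [Bool.false_eq_true, if_false, and_true, if_true, false_and, zero_add, ite_mul, zero_mul, reduceCtorEq]
      rw [Finset.sum_ite_mem, Finset.univ_inter, ← Finset.mul_sum, Finset.sum_sub_distrib,
        Finset.sum_const, nsmul_eq_mul, hs]
      field_simp
    · simp only [Bool.false_eq_true, if_false, and_true, if_true, false_and, add_zero, ite_mul, zero_mul, reduceCtorEq]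
      rw [Finset.sum_ite_mem, Finset.univ_inter, ← Finset.mul_sum]
      field_simp
  have pUX : pushf p (fun z => (z.2.2, z.2.1)) = fun z : Bool × Fin V =>
      1 / (V : ℝ) * (if z.1 then q z.2 else 1 - q z.2) := by
    funext ⟨b, x⟩
    simp only [pushf, Fintype.sum_prod_type, Fintype.sum_bool, hp, Prod.mk.injEq]
    refine Eq.trans (Finset.sum_congr rfl fun s _ => ?_)
      ((hcount x (1 / (C * 2) * (if b then q x else 1 - q x))).trans ?_)
    · rw [Finset.sum_eq_single x (by intro b _ hb; simp [hb]) (by simp)]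
      cases b <;> simp
    rw [hC]
    have : (V : ℝ) - 1 ≠ 0 := by linarith
    field_simp
  unfold condEnt entRV
  rw [pS, pX, pUS, pUX]
  rw [ent_diff (1 / C) (by positivity) (fun s : {s : Finset (Fin V) // s.card = 2} => (∑ x ∈ s.val, q x) / 2),
    ent_diff (1 / (V : ℝ)) (by positivity) q]
  have h1 := part1 V q hq0 hq1
  have hA := sum_pairs (fun s : Finset (Fin V) => h2 ((∑ x ∈ s, q x) / 2) - (∑ x ∈ s, h2 (q x)) / 2)
  have e : (∑ i, ∑ j, if i < j then h2 ((∑ x ∈ ({i, j} : Finset (Fin V)), q x) / 2)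
        - (∑ x ∈ ({i, j} : Finset (Fin V)), h2 (q x)) / 2 else 0)
      = ∑ i, ∑ j, if i < j then h2 ((q i + q j) / 2) - (h2 (q i) + h2 (q j)) / 2 else 0 := by
    refine Finset.sum_congr rfl fun i _ => Finset.sum_congr rfl fun j _ => ?_
    split_ifs with hij
    · rw [Finset.sum_pair hij.ne, Finset.sum_pair hij.ne]
    · rfl
  rw [e, Finset.sum_sub_distrib, ← Finset.sum_div, sum_pairs_sum] at hA
  rw [← hA] at h1
  have h3 := div_le_div_of_nonneg_right h1 hCpos.le
  refine le_trans (le_of_eq ?_) h3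
  have : (V : ℝ) - 1 ≠ 0 := by linarith
  rw [hC]
  field_simp

/-- **Jensen–Shannon sum bound (converse of Corollary 2).**  For every `V ≥ 2` and every
`q ∈ [0,1]^V`, `Σ_{i<j} [h₂((qᵢ+qⱼ)/2) − (h₂(qᵢ)+h₂(qⱼ))/2] ≤ ⌊V²/4⌋`, with equality
attained when `qᵢ = 0` on a set of `⌊V/2⌋` indices and `qᵢ = 1` on the remaining
`⌈V/2⌉` indices.  Equivalently, for any binary `U` obtained from `X` by a stochastic
map in the pair model, `H(U|S) − H(U|X) ≤ ⌊V²/4⌋ / C(V,2)`. -/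
theorem js_sum_bound (V : ℕ) (hV : 2 ≤ V)
    (q : Fin V → ℝ) (hq0 : ∀ i, 0 ≤ q i) (hq1 : ∀ i, q i ≤ 1) :
    (∑ i : Fin V, ∑ j : Fin V,
        if i < j then h2 ((q i + q j) / 2) - (h2 (q i) + h2 (q j)) / 2 else 0)
      ≤ ((V ^ 2 / 4 : ℕ) : ℝ) ∧
    (∀ A : Finset (Fin V), A.card = V / 2 →
      (∑ i : Fin V, ∑ j : Fin V,
          if i < j then
            h2 (((if i ∈ A then (0 : ℝ) else 1) + (if j ∈ A then (0 : ℝ) else 1)) / 2)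
              - (h2 (if i ∈ A then (0 : ℝ) else 1) + h2 (if j ∈ A then (0 : ℝ) else 1)) / 2
          else 0)
        = ((V ^ 2 / 4 : ℕ) : ℝ)) ∧
    -- equivalently, in the pair model with U drawn from X via q:
    (let p : {s : Finset (Fin V) // s.card = 2} × Fin V × Bool → ℝ :=
      fun z => (if z.2.1 ∈ z.1.val then 1 / ((V.choose 2 : ℝ) * 2) else 0) *
        (if z.2.2 then q z.2.1 else 1 - q z.2.1)
    let Urv : {s : Finset (Fin V) // s.card = 2} × Fin V × Bool → Bool := fun z => z.2.2
    let Xrv : {s : Finset (Fin V) // s.card = 2} × Fin V × Bool → Fin V := fun z => z.2.1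
    let Srv : {s : Finset (Fin V) // s.card = 2} × Fin V × Bool →
        {s : Finset (Fin V) // s.card = 2} := fun z => z.1
    condEnt p Urv Srv - condEnt p Urv Xrv ≤ ((V ^ 2 / 4 : ℕ) : ℝ) / (V.choose 2 : ℝ)) := by
  refine ⟨part1 V q hq0 hq1, fun A hA => part2 V A hA, ?_⟩
  intro p Urv Xrv Srv
  exact part3 V hV q hq0 hq1 p (fun s x b => rfl)
end
end

section
/- Soft-covering lemma (expectation version). Let U, X be finite sets, P_U a pmf on U, and W_{X|U} a conditional pmf; let P_X(x) = Σ_u P_U(u) W_{X|U}(x|u) and let I(U;X) be the mutual information under the joint pmf P_U · W_{X|U}. For each n, let C_n = (U^n(1), …, U^n(N_n)) with N_n = ⌈2^{nR}⌉ be a random codebook whose codewords are drawn independently, each from P_U^{⊗n}, and let P̂_{X^n}(x^n) = (1/N_n) Σ_{i=1}^{N_n} ∏_{t=1}^n W_{X|U}(x_t | U_t(i)) be the (codebook-dependent) induced output pmf. If R > I(U;X), then there exists σ > 0 such that for all sufficiently large n, E_{C_n}[ V(P̂_{X^n}, P_X^{⊗n}) ] ≤ e^{−nσ}. -/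
open Finset Filter Real

noncomputable section

open scoped Classical

lemma sc_sum_prod {A : Type*} [Fintype A] {N : ℕ} (F : Fin N → A → ℝ) :
    ∑ c : Fin N → A, ∏ i, F i (c i) = ∏ i, ∑ a, F i a := by
  rw [Finset.prod_univ_sum]
  simp

lemma sc_total {A : Type*} [Fintype A] (q : A → ℝ) (hq1 : ∑ a, q a = 1) (N : ℕ) :
    ∑ c : Fin N → A, ∏ i, q (c i) = 1 := by
  rw [sc_sum_prod (fun _ => q)]
  simp [hq1]

lemma sc_one {A : Type*} [Fintype A] (q : A → ℝ) (hq1 : ∑ a, q a = 1) {N : ℕ}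
    (k : A → ℝ) (j : Fin N) :
    ∑ c : Fin N → A, (∏ i, q (c i)) * k (c j) = ∑ a, q a * k a := by
  have h : ∀ c : Fin N → A, (∏ i, q (c i)) * k (c j)
      = ∏ i, (q (c i) * (if i = j then k (c i) else 1)) := by
    intro c
    rw [Finset.prod_mul_distrib]
    simp
  simp_rw [h]
  rw [sc_sum_prod (fun i a => q a * (if i = j then k a else 1))]
  rw [Finset.prod_eq_single j]
  · simp
  · intro b _ hb
    simp [hb, hq1]
  · simp

lemma sc_two {A : Type*} [Fintype A] (q : A → ℝ) {N : ℕ}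
    (k : A → ℝ) (hk : ∑ a, q a * k a = 0) (j l : Fin N) (hjl : j ≠ l) :
    ∑ c : Fin N → A, (∏ i, q (c i)) * (k (c j) * k (c l)) = 0 := by
  have h : ∀ c : Fin N → A, (∏ i, q (c i)) * (k (c j) * k (c l))
      = ∏ i, (q (c i) * ((if i = j then k (c i) else 1) * (if i = l then k (c i) else 1))) := by
    intro c
    rw [Finset.prod_mul_distrib, Finset.prod_mul_distrib]
    simp
  simp_rw [h]
  rw [sc_sum_prod (fun i a => q a * ((if i = j then k a else 1) * (if i = l then k a else 1)))]
  apply Finset.prod_eq_zero (Finset.mem_univ j)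
  simp [hjl, hk]

lemma sc_var {A : Type*} [Fintype A] (q : A → ℝ) (hq1 : ∑ a, q a = 1) {N : ℕ}
    (k : A → ℝ) (hk : ∑ a, q a * k a = 0) :
    ∑ c : Fin N → A, (∏ i, q (c i)) * (∑ i, k (c i)) ^ 2 = N * ∑ a, q a * k a ^ 2 := by
  have h : ∀ c : Fin N → A, (∏ i, q (c i)) * (∑ i, k (c i)) ^ 2
      = ∑ j, ∑ l, (∏ i, q (c i)) * (k (c j) * k (c l)) := by
    intro c
    rw [sq, Finset.sum_mul_sum, Finset.mul_sum]
    simp_rw [Finset.mul_sum]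
  simp_rw [h]
  rw [Finset.sum_comm]
  have h2 : ∀ j : Fin N, ∑ c : Fin N → A, ∑ l, (∏ i, q (c i)) * (k (c j) * k (c l))
      = ∑ a, q a * k a ^ 2 := by
    intro j
    rw [Finset.sum_comm, Finset.sum_eq_single j]
    · rw [← sc_one q hq1 (fun a => k a ^ 2) j]
      simp [sq]
    · intro l _ hl
      exact sc_two q k hk j l hl.symm
    · simp
  simp [h2]

/-- First absolute moment bounded by root of the second moment. -/
lemma sc_cs {B : Type*} [Fintype B] (w : B → ℝ) (hw : ∀ b, 0 ≤ w b) (hw1 : ∑ b, w b = 1)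
    (g : B → ℝ) : ∑ b, w b * |g b| ≤ Real.sqrt (∑ b, w b * g b ^ 2) := by
  apply Real.le_sqrt_of_sq_le
  have h := Finset.sum_mul_sq_le_sq_mul_sq Finset.univ (fun b => √(w b)) (fun b => √(w b) * |g b|)
  have e1 : ∀ b, √(w b) * (√(w b) * |g b|) = w b * |g b| := by
    intro b; rw [← mul_assoc, Real.mul_self_sqrt (hw b)]
  have e2 : ∀ b, (√(w b) * |g b|) ^ 2 = w b * g b ^ 2 := by
    intro b; rw [mul_pow, Real.sq_sqrt (hw b), sq_abs]
  have e3 : ∀ b, √(w b) ^ 2 = w b := fun b => Real.sq_sqrt (hw b)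
  simp_rw [e1, e2, e3, hw1, one_mul] at h
  exact h

lemma sc_mean {A : Type*} [Fintype A] (q : A → ℝ) (hq0 : ∀ a, 0 ≤ q a)
    (hq1 : ∑ a, q a = 1) {N : ℕ} (hN : 0 < N) (g : A → ℝ) :
    ∑ c : Fin N → A, (∏ i, q (c i)) * |1 / (N : ℝ) * ∑ i, g (c i) - ∑ a, q a * g a|
      ≤ Real.sqrt ((∑ a, q a * g a ^ 2) / N) := by
  have hN' : (N : ℝ) ≠ 0 := by positivity
  refine (sc_cs (fun c : Fin N → A => ∏ i, q (c i)) (fun c => Finset.prod_nonneg fun i _ => hq0 _)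
    (sc_total q hq1 N) _).trans ?_
  apply Real.sqrt_le_sqrt
  set m := ∑ a, q a * g a with hm
  have hk : ∑ a, q a * (g a - m) = 0 := by
    simp_rw [mul_sub, Finset.sum_sub_distrib, ← Finset.sum_mul, hq1]
    simp [hm]
  have e : ∀ c : Fin N → A, (∏ i, q (c i)) * (1 / (N : ℝ) * ∑ i, g (c i) - m) ^ 2
      = (1 / (N:ℝ)) ^ 2 * ((∏ i, q (c i)) * (∑ i, (g (c i) - m)) ^ 2) := by
    intro c
    rw [Finset.sum_sub_distrib]
    simp
    field_simp
  simp_rw [e]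
  rw [← Finset.mul_sum, sc_var q hq1 (fun a => g a - m) hk]
  have e2 : ∑ a, q a * (g a - m) ^ 2 = ∑ a, q a * g a ^ 2 - m ^ 2 := by
    have : ∀ a, q a * (g a - m) ^ 2 = q a * g a ^ 2 - 2 * m * (q a * g a) + m ^ 2 * q a := by
      intro a; ring
    simp_rw [this, Finset.sum_add_distrib, Finset.sum_sub_distrib, ← Finset.mul_sum, hq1, ← hm]
    ring
  rw [e2]
  have : (1 / (N:ℝ)) ^ 2 * (N * (∑ a, q a * g a ^ 2 - m ^ 2))
      = (∑ a, q a * g a ^ 2 - m ^ 2) / N := by field_simp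
  rw [this]
  gcongr
  nlinarith [sq_nonneg m]

lemma sc_trunc {A : Type*} [Fintype A] (q : A → ℝ) (hq0 : ∀ a, 0 ≤ q a)
    (hq1 : ∑ a, q a = 1) {N : ℕ} (hN : 0 < N) (f : A → ℝ) (hf : ∀ a, 0 ≤ f a)
    (T : ℝ) (hT : 0 ≤ T) :
    ∑ c : Fin N → A, (∏ i, q (c i)) * |1 / (N : ℝ) * ∑ i, f (c i) - ∑ a, q a * f a|
      ≤ Real.sqrt ((T * ∑ a, q a * f a) / N)
        + 2 * ∑ a, q a * (if T < f a then f a else 0) := by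
  have hN' : (N : ℝ) ≠ 0 := by positivity
  set h : A → ℝ := fun a => if T < f a then f a else 0 with hh
  set g : A → ℝ := fun a => if T < f a then 0 else f a with hg
  have hfg : ∀ a, f a = g a + h a := by
    intro a; simp only [hg, hh]; split_ifs <;> simp
  have hh0 : ∀ a, 0 ≤ h a := by
    intro a; simp only [hh]; split_ifs <;> simp [hf]
  have hQ : ∀ c : Fin N → A, 0 ≤ ∏ i, q (c i) := fun c => Finset.prod_nonneg fun i _ => hq0 _
  have hEh : 0 ≤ ∑ a, q a * h a := Finset.sum_nonneg fun a _ => mul_nonneg (hq0 a) (hh0 a)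
  have hmean := sc_mean q hq0 hq1 hN g
  have hg2 : √((∑ a, q a * g a ^ 2) / N) ≤ √((T * ∑ a, q a * f a) / N) := by
    apply Real.sqrt_le_sqrt
    gcongr
    rw [Finset.mul_sum]
    apply Finset.sum_le_sum
    intro a _
    have : g a ^ 2 ≤ T * f a := by
      simp only [hg]; split_ifs with h1
      · have := mul_nonneg hT (hf a); simpa using this
      · push Not at h1; nlinarith [hf a]
    nlinarith [hq0 a]
  have hpt : ∀ c : Fin N → A, (∏ i, q (c i)) * |1 / (N : ℝ) * ∑ i, f (c i) - ∑ a, q a * f a|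
      ≤ (∏ i, q (c i)) * |1 / (N : ℝ) * ∑ i, g (c i) - ∑ a, q a * g a|
        + (1 / (N:ℝ) * ∑ j, (∏ i, q (c i)) * h (c j) + (∏ i, q (c i)) * ∑ a, q a * h a) := by
    intro c
    rw [← Finset.mul_sum]
    have e : 1 / (N : ℝ) * ∑ i, f (c i) - ∑ a, q a * f a
        = (1 / (N : ℝ) * ∑ i, g (c i) - ∑ a, q a * g a)
          + (1 / (N : ℝ) * ∑ i, h (c i) - ∑ a, q a * h a) := by
      simp_rw [hfg, mul_add, Finset.sum_add_distrib]; ring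
    have p : 0 ≤ 1 / (N : ℝ) * ∑ i, h (c i) :=
      mul_nonneg (by positivity) (Finset.sum_nonneg fun i _ => hh0 _)
    have t : |1 / (N : ℝ) * ∑ i, h (c i) - ∑ a, q a * h a|
        ≤ 1 / (N : ℝ) * ∑ i, h (c i) + ∑ a, q a * h a := by
      rw [abs_le]; constructor <;> linarith
    rw [e]
    have t2 := (abs_add_le (1 / (N : ℝ) * ∑ i, g (c i) - ∑ a, q a * g a)
      (1 / (N : ℝ) * ∑ i, h (c i) - ∑ a, q a * h a)).trans (add_le_add_right t _)
    refine (mul_le_mul_of_nonneg_left t2 (hQ c)).trans (le_of_eq ?_)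
    ring
  refine (Finset.sum_le_sum fun c _ => hpt c).trans ?_
  rw [Finset.sum_add_distrib, Finset.sum_add_distrib, ← Finset.mul_sum, ← Finset.sum_mul,
    sc_total q hq1, Finset.sum_comm]
  simp_rw [sc_one q hq1 h]
  have : 1 / (N:ℝ) * ∑ j : Fin N, ∑ a, q a * h a = ∑ a, q a * h a := by
    simp; field_simp
  rw [this]
  linarith

/-- The Chernoff exponent: there is a tilt with moment generating function below one. -/
lemma sc_chernoff {Z : Type*} [Fintype Z] (p r : Z → ℝ) (hp1 : ∑ z, p z = 1)
    (hr : ∀ z, p z ≠ 0 → 0 < r z) (hneg : ∑ z, p z * Real.log (r z) < 0) :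
    ∃ s > (0:ℝ), ∑ z, p z * r z ^ s < 1 := by
  have hd : HasDerivAt (fun s : ℝ => ∑ z, p z * r z ^ s) (∑ z, p z * Real.log (r z)) 0 := by
    apply HasDerivAt.fun_sum
    intro z _
    by_cases hz : p z = 0
    · simp [hz, hasDerivAt_const]
    · have h := (Real.hasStrictDerivAt_const_rpow (hr z hz) 0).hasDerivAt.const_mul (p z)
      simpa using h
  have h0 : ∑ z, p z * r z ^ (0:ℝ) = 1 := by simpa using hp1
  have hs := (hasDerivAt_iff_tendsto_slope.mp hd).eventually (gt_mem_nhds hneg)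
  have hs2 : ∀ᶠ s in nhdsWithin (0:ℝ) (Set.Ioi 0), slope (fun s : ℝ => ∑ z, p z * r z ^ s) 0 s < 0 :=
    hs.filter_mono (nhdsWithin_mono _ (fun x hx => ne_of_gt hx))
  obtain ⟨s, hs3, hs4⟩ := (hs2.and self_mem_nhdsWithin).exists
  refine ⟨s, hs4, ?_⟩
  have hs5 : (0:ℝ) < s := hs4
  rw [slope_def_field, h0, sub_zero, div_lt_iff₀ hs5] at hs3
  linarith

lemma sc_mi {U X : Type*} [Fintype U] [Fintype X]
    (PU : U → ℝ) (W : U → X → ℝ)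
    (hPU0 : ∀ u, 0 ≤ PU u) 
    (hW0 : ∀ u x, 0 ≤ W u x) (hW1 : ∀ u, ∑ x, W u x = 1) :
    mi (fun z : U × X => PU z.1 * W z.1 z.2) Prod.fst Prod.snd * Real.log 2
      = ∑ z : U × X, PU z.1 * W z.1 z.2 *
          Real.log (W z.1 z.2 / ∑ u, PU u * W u z.2) := by
  have h1 : pushf (fun z : U × X => PU z.1 * W z.1 z.2) Prod.fst = PU := by
    funext u
    simp only [pushf, Fintype.sum_prod_type]
    rw [Finset.sum_eq_single u]
    · simp [← Finset.mul_sum, hW1]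
    · intro b _ hb; simp [hb]
    · simp
  have h2 : pushf (fun z : U × X => PU z.1 * W z.1 z.2) Prod.snd
      = fun x => ∑ u, PU u * W u x := by
    funext x
    simp [pushf, Fintype.sum_prod_type]
  have h3 : pushf (fun z : U × X => PU z.1 * W z.1 z.2) (fun a => (a.1, a.2))
      = fun z => PU z.1 * W z.1 z.2 := by
    funext x
    simp [pushf]
  have hl : Real.log 2 ≠ 0 := by positivity
  simp only [mi, entRV, h1, h2, h3, ent, Real.logb]
  have e1 : ∑ u, PU u * (Real.log (PU u) / Real.log 2)
      = ∑ z : U × X, PU z.1 * W z.1 z.2 * (Real.log (PU z.1) / Real.log 2) := by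
    rw [Fintype.sum_prod_type]
    refine Finset.sum_congr rfl fun u _ => ?_
    simp [← Finset.sum_mul, ← Finset.mul_sum, hW1]
  have e2 : ∑ x, (∑ u, PU u * W u x) * (Real.log (∑ u, PU u * W u x) / Real.log 2)
      = ∑ z : U × X, PU z.1 * W z.1 z.2 * (Real.log (∑ u, PU u * W u z.2) / Real.log 2) := by
    rw [Fintype.sum_prod_type, Finset.sum_comm]
    refine Finset.sum_congr rfl fun u _ => ?_
    rw [Finset.sum_mul]
  rw [e1, e2, ← Finset.sum_neg_distrib, ← Finset.sum_neg_distrib, ← Finset.sum_neg_distrib,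
    ← Finset.sum_add_distrib, ← Finset.sum_sub_distrib, Finset.sum_mul]
  refine Finset.sum_congr rfl fun z _ => ?_
  by_cases hz : PU z.1 * W z.1 z.2 = 0
  · simp [hz]
  · have ha : PU z.1 ≠ 0 := left_ne_zero_of_mul hz
    have hb : W z.1 z.2 ≠ 0 := right_ne_zero_of_mul hz
    have hP : 0 < ∑ u, PU u * W u z.2 :=
      Finset.sum_pos' (fun u _ => mul_nonneg (hPU0 u) (hW0 u _))
        ⟨z.1, Finset.mem_univ _, lt_of_le_of_ne (mul_nonneg (hPU0 _) (hW0 _ _)) (Ne.symm hz)⟩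
    rw [Real.log_mul ha hb, Real.log_div hb hP.ne']
    field_simp
    ring

/-- The n-letter bound: truncation at `L ^ n` times the output probability. -/
lemma sc_nletter {U X : Type*} [Fintype U] [Fintype X]
    (PU : U → ℝ) (W : U → X → ℝ)
    (hPU0 : ∀ u, 0 ≤ PU u) (hPU1 : ∑ u, PU u = 1)
    (hW0 : ∀ u x, 0 ≤ W u x) (hW1 : ∀ u, ∑ x, W u x = 1)
    (L s : ℝ) (hL : 0 < L) (hs : 0 < s) (n N : ℕ) (hN : 0 < N) :
    (∑ c : Fin N → Fin n → U,
        (∏ i, ∏ t, PU (c i t)) *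
          TV (fun xn : Fin n → X => (1 / (N : ℝ)) * ∑ i, ∏ t, W (c i t) (xn t))
             (fun xn : Fin n → X => ∏ t, ∑ u, PU u * W u (xn t)))
      ≤ √(L ^ n / N) +
        (∑ z : U × X, PU z.1 * W z.1 z.2 *
          (W z.1 z.2 / (∑ u, PU u * W u z.2) / L) ^ s) ^ n := by
  set P : X → ℝ := fun x => ∑ u, PU u * W u x with hP
  have hP0 : ∀ x, 0 ≤ P x := fun x => Finset.sum_nonneg fun u _ => mul_nonneg (hPU0 u) (hW0 u x)
  have hPsum : ∑ x, P x = 1 := by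
    simp only [hP]
    rw [Finset.sum_comm]
    simp [← Finset.mul_sum, hW1, hPU1]
  set q : (Fin n → U) → ℝ := fun a => ∏ t, PU (a t) with hq
  have hq0 : ∀ a, 0 ≤ q a := fun a => Finset.prod_nonneg fun t _ => hPU0 _
  have hq1 : ∑ a, q a = 1 := sc_total PU hPU1 n
  set f : (Fin n → X) → (Fin n → U) → ℝ := fun x a => ∏ t, W (a t) (x t) with hf
  have hf0 : ∀ x a, 0 ≤ f x a := fun x a => Finset.prod_nonneg fun t _ => hW0 _ _
  have hPn : ∀ x : Fin n → X, ∏ t, P (x t) = ∑ a, q a * f x a := by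
    intro x
    simp only [hP, hq, hf]
    rw [← sc_sum_prod (fun t u => PU u * W u (x t))]
    simp_rw [Finset.prod_mul_distrib]
  have hPn0 : ∀ x : Fin n → X, 0 ≤ ∏ t, P (x t) := fun x => Finset.prod_nonneg fun t _ => hP0 _
  have hswap : (∑ c : Fin N → Fin n → U,
        (∏ i, ∏ t, PU (c i t)) *
          TV (fun xn : Fin n → X => (1 / (N : ℝ)) * ∑ i, ∏ t, W (c i t) (xn t))
             (fun xn : Fin n → X => ∏ t, P (xn t)))
      = (∑ x : Fin n → X, ∑ c : Fin N → Fin n → U,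
          (∏ i, q (c i)) * |1 / (N : ℝ) * ∑ i, f x (c i) - ∑ a, q a * f x a|) / 2 := by
    rw [Finset.sum_comm, Finset.sum_div]
    refine Finset.sum_congr rfl fun c _ => ?_
    simp only [TV, hPn]
    rw [← Finset.mul_sum, mul_div_assoc]
  rw [hswap]
  have hx : ∀ x : Fin n → X, ∑ c : Fin N → Fin n → U,
          (∏ i, q (c i)) * |1 / (N : ℝ) * ∑ i, f x (c i) - ∑ a, q a * f x a|
      ≤ (∏ t, P (x t)) * √(L ^ n / N) + 2 * ∑ a : Fin n → U,
          ∏ t, (PU (a t) * W (a t) (x t) * (W (a t) (x t) / P (x t) / L) ^ s) := by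
    intro x
    refine (sc_trunc q hq0 hq1 hN (f x) (hf0 x) ((∏ t, P (x t)) * L ^ n)
      (mul_nonneg (hPn0 x) (by positivity))).trans ?_
    apply add_le_add
    · rw [← hPn]
      apply le_of_eq
      have : (∏ t, P (x t)) * L ^ n * (∏ t, P (x t)) / N
          = (∏ t, P (x t)) ^ 2 * (L ^ n / N) := by ring
      rw [this, Real.sqrt_mul (sq_nonneg _), Real.sqrt_sq (hPn0 x)]
    · apply mul_le_mul_of_nonneg_left _ (by norm_num)
      apply Finset.sum_le_sum
      intro a _
      have hr0 : ∀ t, 0 ≤ W (a t) (x t) / P (x t) / L := fun t =>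
        div_nonneg (div_nonneg (hW0 _ _) (hP0 _)) hL.le
      have hrhs : ∏ t, (PU (a t) * W (a t) (x t) * (W (a t) (x t) / P (x t) / L) ^ s)
          = q a * f x a * (f x a / ((∏ t, P (x t)) * L ^ n)) ^ s := by
        rw [Finset.prod_mul_distrib, Finset.prod_mul_distrib,
          Real.finset_prod_rpow _ _ (fun t _ => hr0 t)]
        simp only [Finset.prod_div_distrib, hq, hf]
        simp [div_div]
      rw [hrhs]
      split_ifs with hlt
      · by_cases h0 : q a * f x a = 0
        · simp [h0]
        · have hpos : 0 < ∏ t, P (x t) := by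
            rw [hPn]
            exact Finset.sum_pos' (fun u _ => mul_nonneg (hq0 u) (hf0 x u))
              ⟨a, Finset.mem_univ _, lt_of_le_of_ne (mul_nonneg (hq0 _) (hf0 _ _)) (Ne.symm h0)⟩
          have h1 : 1 ≤ (f x a / ((∏ t, P (x t)) * L ^ n)) ^ s := by
            apply Real.one_le_rpow _ hs.le
            rw [one_le_div (by positivity)]
            exact hlt.le
          exact le_mul_of_one_le_right (mul_nonneg (hq0 _) (hf0 _ _)) h1
      · rw [mul_zero]
        exact mul_nonneg (mul_nonneg (hq0 _) (hf0 _ _))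
          (Real.rpow_nonneg (div_nonneg (hf0 _ _) (mul_nonneg (hPn0 x) (by positivity))) _)
  have hsum := Finset.sum_le_sum (s := Finset.univ) fun x _ => hx x
  have h1 : ∑ x : Fin n → X, ∏ t, P (x t) = 1 := sc_total P hPsum n
  have h2 : ∑ x : Fin n → X, ∑ a : Fin n → U,
          ∏ t, (PU (a t) * W (a t) (x t) * (W (a t) (x t) / P (x t) / L) ^ s)
      = (∑ z : U × X, PU z.1 * W z.1 z.2 * (W z.1 z.2 / P z.2 / L) ^ s) ^ n := by
    have e : ∀ x : Fin n → X, ∑ a : Fin n → U,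
          ∏ t, (PU (a t) * W (a t) (x t) * (W (a t) (x t) / P (x t) / L) ^ s)
        = ∏ t, ∑ u, PU u * W u (x t) * (W u (x t) / P (x t) / L) ^ s := fun x =>
      sc_sum_prod (fun t u => PU u * W u (x t) * (W u (x t) / P (x t) / L) ^ s)
    simp_rw [e]
    rw [sc_sum_prod (fun _ y => ∑ u, PU u * W u y * (W u y / P y / L) ^ s),
      Fintype.sum_prod_type, Finset.sum_comm]
    simp
  rw [Finset.sum_add_distrib, ← Finset.sum_mul, h1, ← Finset.mul_sum, h2] at hsum
  have h3 := Real.sqrt_nonneg (L ^ n / N)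
  linarith

lemma sc_final (a b : ℝ) (ha0 : 0 ≤ a) (ha : a < 1) (hb0 : 0 ≤ b) (hb : b < 1) :
    ∃ σ > (0:ℝ), ∀ᶠ n : ℕ in atTop, a ^ n + b ^ n ≤ Real.exp (-(n:ℝ) * σ) := by
  obtain ⟨r, hr1, hr2⟩ := exists_between (max_lt (max_lt ha hb) (zero_lt_one' ℝ))
  have har : a < r := lt_of_le_of_lt (le_max_left a b |>.trans (le_max_left _ _)) hr1
  have hbr : b < r := lt_of_le_of_lt (le_max_right a b |>.trans (le_max_left _ _)) hr1
  have hr0 : 0 < r := lt_of_le_of_lt (le_max_right _ _) hr1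
  refine ⟨-Real.log r, by have := Real.log_neg hr0 hr2; linarith, ?_⟩
  have t : ∀ y : ℝ, 0 ≤ y → y < r → ∀ᶠ n : ℕ in atTop, (y / r) ^ n < 1 / 2 := fun y h0 h =>
    (tendsto_pow_atTop_nhds_zero_of_lt_one (div_nonneg h0 hr0.le)
      ((div_lt_one hr0).2 h)).eventually (gt_mem_nhds (by norm_num))
  filter_upwards [t a ha0 har, t b hb0 hbr] with n h1 h2
  have e : Real.exp (-(n:ℝ) * -Real.log r) = r ^ n := by
    rw [neg_mul_neg, Real.exp_nat_mul, Real.exp_log hr0]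
  rw [e]
  rw [div_pow, div_lt_iff₀ (by positivity)] at h1 h2
  linarith

/-- **Soft-covering lemma (expectation version).**  Let `P_U` be a pmf on a finite set
`U` and `W = W_{X|U}` a conditional pmf with output marginal `P_X`.  For each `n`, draw
a random codebook of `N_n = ⌈2^{nR}⌉` codewords i.i.d. from `P_U^{⊗n}` and let
`P̂_{Xⁿ}` be the induced output pmf.  If `R > I(U;X)`, then there is `σ > 0` such that
for all sufficiently large `n`, `E[V(P̂_{Xⁿ}, P_X^{⊗n})] ≤ e^{−nσ}`. -/
theorem soft_covering_expectation
    {U X : Type*} [Fintype U] [Fintype X]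
    (PU : U → ℝ) (W : U → X → ℝ)
    (hPU0 : ∀ u, 0 ≤ PU u) (hPU1 : ∑ u, PU u = 1)
    (hW0 : ∀ u x, 0 ≤ W u x) (hW1 : ∀ u, ∑ x, W u x = 1)
    (R : ℝ)
    (hR : R > mi (fun z : U × X => PU z.1 * W z.1 z.2) Prod.fst Prod.snd) :
    ∃ σ > (0 : ℝ), ∀ᶠ n : ℕ in atTop,
      (∑ c : Fin (⌈(2 : ℝ) ^ ((n : ℝ) * R)⌉₊) → Fin n → U,
        (∏ i, ∏ t, PU (c i t)) *
          TV (fun xn : Fin n → X =>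
                (1 / ((⌈(2 : ℝ) ^ ((n : ℝ) * R)⌉₊ : ℕ) : ℝ)) *
                  ∑ i, ∏ t, W (c i t) (xn t))
             (fun xn : Fin n → X => ∏ t, ∑ u, PU u * W u (xn t)))
        ≤ Real.exp (-(n : ℝ) * σ) := by
  set J := mi (fun z : U × X => PU z.1 * W z.1 z.2) Prod.fst Prod.snd with hJ
  set L : ℝ := 2 ^ ((J + R) / 2) with hLdef
  have hL : 0 < L := by positivity
  have hl2 : 0 < Real.log 2 := Real.log_pos (by norm_num)
  have hp1 : ∑ z : U × X, PU z.1 * W z.1 z.2 = 1 := by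
    rw [Fintype.sum_prod_type]
    simp [← Finset.mul_sum, hW1, hPU1]
  have hpos : ∀ z : U × X, PU z.1 * W z.1 z.2 ≠ 0 →
      0 < W z.1 z.2 / ∑ u, PU u * W u z.2 := by
    intro z hz
    have hP : 0 < ∑ u, PU u * W u z.2 :=
      Finset.sum_pos' (fun u _ => mul_nonneg (hPU0 u) (hW0 u _))
        ⟨z.1, Finset.mem_univ _, lt_of_le_of_ne (mul_nonneg (hPU0 _) (hW0 _ _)) (Ne.symm hz)⟩
    exact div_pos (lt_of_le_of_ne (hW0 _ _) (Ne.symm (right_ne_zero_of_mul hz))) hP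
  have hlog : ∑ z : U × X, PU z.1 * W z.1 z.2 *
      Real.log (W z.1 z.2 / (∑ u, PU u * W u z.2) / L) < 0 := by
    have e : ∑ z : U × X, PU z.1 * W z.1 z.2 *
        Real.log (W z.1 z.2 / (∑ u, PU u * W u z.2) / L)
        = J * Real.log 2 - Real.log L := by
      rw [hJ, sc_mi PU W hPU0 hW0 hW1]
      have : Real.log L = ∑ z : U × X, PU z.1 * W z.1 z.2 * Real.log L := by
        rw [← Finset.sum_mul, hp1, one_mul]
      rw [this, ← Finset.sum_sub_distrib]
      refine Finset.sum_congr rfl fun z _ => ?_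
      by_cases hz : PU z.1 * W z.1 z.2 = 0
      · simp [hz]
      · rw [Real.log_div (hpos z hz).ne' hL.ne']
        ring
    rw [e, hLdef, Real.log_rpow (by norm_num)]
    nlinarith
  obtain ⟨s, hs, hs1⟩ := sc_chernoff (fun z : U × X => PU z.1 * W z.1 z.2)
    (fun z => W z.1 z.2 / (∑ u, PU u * W u z.2) / L) hp1
    (fun z hz => div_pos (hpos z hz) hL) hlog
  have hb0 : 0 ≤ ∑ z : U × X, PU z.1 * W z.1 z.2 *
      (W z.1 z.2 / (∑ u, PU u * W u z.2) / L) ^ s := by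
    refine Finset.sum_nonneg fun z _ => mul_nonneg (mul_nonneg (hPU0 _) (hW0 _ _)) ?_
    refine Real.rpow_nonneg (div_nonneg (div_nonneg (hW0 _ _) ?_) hL.le) _
    exact Finset.sum_nonneg fun u _ => mul_nonneg (hPU0 u) (hW0 u _)
  have hL2 : L / 2 ^ R < 1 := by
    rw [div_lt_one (by positivity), hLdef]
    exact Real.rpow_lt_rpow_of_exponent_lt (by norm_num) (by linarith)
  have ha1 : √(L / 2 ^ R) < 1 := by
    rw [Real.sqrt_lt' one_pos]; simpa using hL2
  obtain ⟨σ, hσ, hev⟩ := sc_final (√(L / 2 ^ R)) _ (Real.sqrt_nonneg _) ha1 hb0 hs1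
  refine ⟨σ, hσ, hev.mono fun n hn => ?_⟩
  have hNpos : 0 < ⌈(2 : ℝ) ^ ((n : ℝ) * R)⌉₊ := Nat.ceil_pos.2 (by positivity)
  refine (sc_nletter PU W hPU0 hPU1 hW0 hW1 L s hL hs n _ hNpos).trans (le_trans ?_ hn)
  gcongr
  apply Real.sqrt_le_iff.2 ⟨by positivity, ?_⟩
  rw [← pow_mul, mul_comm n 2, pow_mul, Real.sq_sqrt (by positivity), div_pow]
  have e : ((2:ℝ) ^ R) ^ n = 2 ^ ((n : ℝ) * R) := by
    rw [mul_comm, Real.rpow_mul (by norm_num), Real.rpow_natCast]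
  rw [e]
  gcongr
  exact Nat.le_ceil _
end
end
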